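/- Let m > 1 be an integer. Then the field F^1_m(ℚ) of meromorphic modular functions for Γ^1(m) with rational Fourier coefficients is generated over ℚ(j) by the single Fricke function f_{(1/m, 0)}; that is, F^1_m(ℚ) = ℚ(j, f_{(1/m,0)}), where j is the elliptic modular j-invariant. -/

import Mathlib

open Complex UpperHalfPlane Matrix MatrixGroups CongruenceSubgroup
open scoped UpperHalfPlane Manifold Real

noncomputable section

/-- `N·τ` as a point of the upper half-plane (junk value `τ` if `N = 0`). -/
def hsmul (N : ℕ) (τ : UpperHalfPlane) : UpperHalfPlane :=
  if hN : 0 < N then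
    ⟨(N : ℂ) * τ, by
      have h0 : (0 : ℝ) < (N : ℝ) := by exact_mod_cast hN
      simpa [Complex.mul_im] using mul_pos h0 τ.2⟩
  else τ

/-- The Siegel function `g_r(τ)` given by its infinite product expansion. -/
def siegel (r : ℚ × ℚ) (τ : ℍ) : ℂ :=
  -Complex.exp ((Real.pi : ℂ) * Complex.I * (((r.1 : ℂ) ^ 2 - (r.1 : ℂ) + 1 / 6) * τ)) *
    Complex.exp ((Real.pi : ℂ) * Complex.I * (r.2 : ℂ) * ((r.1 : ℂ) - 1)) *
    (1 - Complex.exp (2 * (Real.pi : ℂ) * Complex.I * ((r.1 : ℂ) * τ + (r.2 : ℂ)))) *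
    ∏' n : ℕ,
      ((1 - Complex.exp (2 * (Real.pi : ℂ) * Complex.I *
          (((n : ℂ) + 1 + (r.1 : ℂ)) * τ + (r.2 : ℂ)))) *
       (1 - Complex.exp (2 * (Real.pi : ℂ) * Complex.I *
          (((n : ℂ) + 1 - (r.1 : ℂ)) * τ - (r.2 : ℂ)))))

/-- The lattice point `ω = m·τ + n` attached to a pair `(m,n) ∈ ℤ²`. -/
def lat (τ : ℍ) (p : ℤ × ℤ) : ℂ := (p.1 : ℂ) * τ + (p.2 : ℂ)

/-- `g₂(τ) = 60 ∑_{ω ∈ L_τ ∖ {0}} ω⁻⁴`. -/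
def g2C (τ : ℍ) : ℂ := 60 * ∑' p : {p : ℤ × ℤ // p ≠ 0}, ((lat τ p.1) ^ 4)⁻¹

/-- `g₃(τ) = 140 ∑_{ω ∈ L_τ ∖ {0}} ω⁻⁶`. -/
def g3C (τ : ℍ) : ℂ := 140 * ∑' p : {p : ℤ × ℤ // p ≠ 0}, ((lat τ p.1) ^ 6)⁻¹

/-- The discriminant `Δ(τ) = g₂(τ)³ - 27 g₃(τ)²`. -/
def discC (τ : ℍ) : ℂ := g2C τ ^ 3 - 27 * g3C τ ^ 2

/-- The Weierstrass `℘`-function relative to the lattice `L_τ = ℤτ + ℤ`. -/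
def wpC (z : ℂ) (τ : ℍ) : ℂ :=
  (z ^ 2)⁻¹ + ∑' p : {p : ℤ × ℤ // p ≠ 0}, (((z - lat τ p.1) ^ 2)⁻¹ - ((lat τ p.1) ^ 2)⁻¹)

/-- The Fricke function `f_r(τ)`. -/
def fricke (r : ℚ × ℚ) (τ : ℍ) : ℂ :=
  -(2 ^ 7 * 3 ^ 5) * (g2C τ * g3C τ / discC τ) * wpC ((r.1 : ℂ) * τ + (r.2 : ℂ)) τ

/-- The elliptic modular `j`-invariant. -/
def jinv (τ : ℍ) : ℂ := 1728 * g2C τ ^ 3 / discC τ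

/-- The Dedekind eta function. -/
def etaC (τ : ℍ) : ℂ :=
  (Real.sqrt (2 * Real.pi) : ℂ) * Complex.exp (2 * (Real.pi : ℂ) * Complex.I / 16) *
    Complex.exp (2 * (Real.pi : ℂ) * Complex.I * τ / 24) *
    ∏' n : ℕ, (1 - Complex.exp (2 * (Real.pi : ℂ) * Complex.I * ((n : ℂ) + 1) * τ))

/-- `r ∈ ℚ² ∖ ℤ²`. -/
def NonIntegral (r : ℚ × ℚ) : Prop := ¬ ∃ a b : ℤ, r = ((a : ℚ), (b : ℚ))

/-- `r ∈ (1/N)ℤ²`. -/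
def InDen (N : ℕ) (r : ℚ × ℚ) : Prop := ∃ a b : ℤ, r = ((a : ℚ) / N, (b : ℚ) / N)

/-- Membership in `Γ^1(N)`: `a ≡ d ≡ 1` and `b ≡ 0 (mod N)`. -/
def GammaUpper (N : ℕ) (γ : SL(2, ℤ)) : Prop :=
  ((γ 0 0 : ℤ) : ZMod N) = 1 ∧ ((γ 1 1 : ℤ) : ZMod N) = 1 ∧ ((γ 0 1 : ℤ) : ZMod N) = 0

/-- The transpose action `ᵗγ r = (a r₁ + c r₂, b r₁ + d r₂)` of `γ = [[a,b],[c,d]]`. -/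
def tAct (γ : SL(2, ℤ)) (r : ℚ × ℚ) : ℚ × ℚ :=
  ((γ 0 0 : ℚ) * r.1 + (γ 1 0 : ℚ) * r.2, (γ 0 1 : ℚ) * r.1 + (γ 1 1 : ℚ) * r.2)

/-- The power `q^{n/d} = e^{2πi(n/d)τ}`. -/
def qpow (d : ℕ) (n : ℤ) (τ : ℍ) : ℂ :=
  Complex.exp (2 * (Real.pi : ℂ) * Complex.I * ((n : ℂ) / (d : ℂ)) * τ)

/-- `h` is a weakly holomorphic modular function for `Γ₁(N)` with rational
Fourier coefficients: holomorphic on `ℍ`, `Γ₁(N)`-invariant, with a convergent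
`q`-expansion at `i∞` having rational coefficients, and meromorphic at every cusp. -/
def IsWeaklyHolo1 (N : ℕ) (h : ℍ → ℂ) : Prop :=
  MDifferentiable 𝓘(ℂ) 𝓘(ℂ) h ∧
  (∀ γ ∈ Gamma1 N, ∀ τ : ℍ, h (γ • τ) = h τ) ∧
  (∃ n₀ : ℤ, ∃ c : ℕ → ℚ,
    ∀ τ : ℍ, HasSum (fun n : ℕ => (c n : ℂ) * qpow 1 (n₀ + n) τ) (h τ)) ∧
  (∀ γ : SL(2, ℤ), ∃ n₀ : ℤ, ∃ c : ℕ → ℂ,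
    ∀ τ : ℍ, HasSum (fun n : ℕ => c n * qpow N (n₀ + n) τ) (h (γ • τ)))

/-- `h` is a weakly holomorphic modular function for `Γ^1(N)` with rational
Fourier coefficients (the expansion at `i∞` being in powers of `q^{1/N}`). -/
def IsWeaklyHoloUp (N : ℕ) (h : ℍ → ℂ) : Prop :=
  MDifferentiable 𝓘(ℂ) 𝓘(ℂ) h ∧
  (∀ γ : SL(2, ℤ), GammaUpper N γ → ∀ τ : ℍ, h (γ • τ) = h τ) ∧
  (∃ n₀ : ℤ, ∃ c : ℕ → ℚ,
    ∀ τ : ℍ, HasSum (fun n : ℕ => (c n : ℂ) * qpow N (n₀ + n) τ) (h τ)) ∧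
  (∀ γ : SL(2, ℤ), ∃ n₀ : ℤ, ∃ c : ℕ → ℂ,
    ∀ τ : ℍ, HasSum (fun n : ℕ => c n * qpow N (n₀ + n) τ) (h (γ • τ)))

/-- The Weierstrass-unit generator
`f^1_{m,N} = (f_{(1/N,0)} - f_{(1/m,0)})/(f_{(2/m,0)} - f_{(1/m,0)})`. -/
def fUnit (m N : ℕ) (τ : ℍ) : ℂ :=
  (fricke ((1 : ℚ) / N, 0) τ - fricke ((1 : ℚ) / m, 0) τ) /
    (fricke ((2 : ℚ) / m, 0) τ - fricke ((1 : ℚ) / m, 0) τ)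

/-- The extension of `h : ℍ → ℂ` to `ℂ` by `0`. -/
def extH (h : ℍ → ℂ) : ℂ → ℂ := fun z => if hz : 0 < z.im then h ⟨z, hz⟩ else 0

/-- `h` is a meromorphic modular function for `Γ^1(m)` with rational Fourier
coefficients: meromorphic on `ℍ`, `Γ^1(m)`-invariant, with a `q^{1/m}`-expansion
at `i∞` with rational coefficients valid for `im τ` large, and meromorphic at
every cusp. -/
def IsMeroModUp (m : ℕ) (h : ℍ → ℂ) : Prop :=
  MeromorphicOn (extH h) {z : ℂ | 0 < z.im} ∧
  (∀ γ : SL(2, ℤ), GammaUpper m γ → ∀ τ : ℍ, h (γ • τ) = h τ) ∧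
  (∃ A : ℝ, ∃ n₀ : ℤ, ∃ c : ℕ → ℚ, ∀ τ : ℍ, A < τ.im →
    HasSum (fun n : ℕ => (c n : ℂ) * qpow m (n₀ + n) τ) (h τ)) ∧
  (∀ γ : SL(2, ℤ), ∃ A : ℝ, ∃ n₀ : ℤ, ∃ c : ℕ → ℂ, ∀ τ : ℍ, A < τ.im →
    HasSum (fun n : ℕ => c n * qpow m (n₀ + n) τ) (h (γ • τ)))

/-- Evaluation of a two-variable rational polynomial at `(j(τ), f_{(1/m,0)}(τ))`. -/
def evalJF (m : ℕ) (P : MvPolynomial (Fin 2) ℚ) (τ : ℍ) : ℂ :=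
  MvPolynomial.aeval ![jinv τ, fricke ((1 : ℚ) / m, 0) τ] P

open Filter Topology

/-!
The functions admitting a Laurent expansion in `q^{1/m}` near `i∞` with coefficients in a field
`K ⊆ ℂ` form a `K`-algebra closed under division. Both `j` and `f_{(1/m,0)}` lie in it for `K = ℚ`;
for the latter, the expansion of `℘(τ/m)` in `q^{1/m}` has rational coefficients once `(2πi)²` is
factored out, and the weights of `g₂ g₃ / Δ` and `℘` compensate this factor.

Over `ℂ`, a modular function `h` for `Γ^1(m)` is a rational function of `j` and `f = f_{(1/m,0)}` by
Lagrange interpolation: the pairs `(f ∘ γ, h ∘ γ)` form a finite orbit under `SL₂(ℤ)`, and `f` alone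
already separates it because `℘(z) = ℘(w)` only for `z ≡ ±w`. The interpolation polynomial has
coefficients of level one, and a level one function becomes a polynomial in `j` after its finitely
many poles modulo `SL₂(ℤ)` are cleared by powers of `j - j(τ)`.

Finally, a relation `Q(j, f) h = P(j, f)` with complex coefficients is split along a basis of `ℂ`
over `ℚ`. Since `h`, `j` and `f` all have rational expansions, each coordinate is again such a
relation, and one of them has a nonzero left-hand polynomial.
-/

section TaylorCoefficients

variable (K : Type*) [Field K] [Algebra K ℂ]

/-- The algebra of functions `ℂ → ℂ` that are analytic at `0` with Taylor coefficients in `K`.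
As `K` contains `ℚ`, we ask equivalently that the iterated derivatives at `0` lie in `K`. -/
def taylorSubalgebra : Subalgebra K (ℂ → ℂ) where
  carrier := {φ | AnalyticAt ℂ φ 0 ∧ ∀ n, iteratedDeriv n φ 0 ∈ (algebraMap K ℂ).fieldRange}
  mul_mem' {φ ψ} hφ hψ := ⟨hφ.1.mul hψ.1, fun n => by
    rw [iteratedDeriv_mul hφ.1.contDiffAt hψ.1.contDiffAt]
    exact sum_mem fun i _ => mul_mem (mul_mem (natCast_mem _ _) (hφ.2 _)) (hψ.2 _)⟩
  add_mem' {φ ψ} hφ hψ := ⟨hφ.1.add hψ.1, fun n => by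
    rw [iteratedDeriv_add hφ.1.contDiffAt hψ.1.contDiffAt]
    exact add_mem (hφ.2 n) (hψ.2 n)⟩
  algebraMap_mem' c := ⟨analyticAt_const, fun n => by
    change iteratedDeriv n (fun _ => algebraMap K ℂ c) 0 ∈ _
    rw [iteratedDeriv_const]
    split_ifs
    exacts [⟨c, rfl⟩, zero_mem _]⟩

variable {K} {φ ψ : ℂ → ℂ}

lemma mem_taylorSubalgebra_complex_iff : φ ∈ taylorSubalgebra ℂ ↔ AnalyticAt ℂ φ 0 :=
  ⟨fun h => h.1, fun h => ⟨h, fun _ => ⟨_, rfl⟩⟩⟩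

lemma id_mem_taylorSubalgebra : (fun z => z) ∈ taylorSubalgebra K :=
  ⟨analyticAt_id, fun n => by
    rw [iteratedDeriv_fun_id_zero]
    split_ifs
    exacts [one_mem _, zero_mem _]⟩

lemma inv_mem_taylorSubalgebra (hφ : φ ∈ taylorSubalgebra K) (h0 : φ 0 ≠ 0) :
    φ⁻¹ ∈ taylorSubalgebra K := by
  have hinv : AnalyticAt ℂ φ⁻¹ 0 := hφ.1.inv h0
  have h0K : φ 0 ∈ (algebraMap K ℂ).fieldRange := by simpa using hφ.2 0
  refine ⟨hinv, fun n => ?_⟩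
  induction n using Nat.strong_induction_on with
  | _ n ih =>
    rcases Nat.eq_zero_or_pos n with rfl | hn
    · simpa using inv_mem h0K
    have mul_inv_eq_one : φ * φ⁻¹ =ᶠ[𝓝 0] fun _ => 1 := by
      filter_upwards [hφ.1.continuousAt.eventually_ne h0] with z hz
      exact mul_inv_cancel₀ hz
    have leibniz := mul_inv_eq_one.iteratedDeriv_eq n
    rw [iteratedDeriv_const, if_neg hn.ne', iteratedDeriv_mul hφ.1.contDiffAt hinv.contDiffAt,
      Finset.sum_range_succ'] at leibniz
    simp only [Nat.choose_zero_right, Nat.cast_one, one_mul, iteratedDeriv_zero,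
      Nat.sub_zero] at leibniz
    rw [← mul_div_cancel_left₀ (iteratedDeriv n φ⁻¹ 0) h0, eq_neg_of_add_eq_zero_right leibniz]
    refine div_mem (neg_mem (sum_mem fun i _ => ?_)) h0K
    exact mul_mem (mul_mem (natCast_mem _ _) (hφ.2 _)) (ih _ (by omega))

lemma iteratedDeriv_pow_mul_zero (hψ : AnalyticAt ℂ ψ 0) (n k : ℕ) :
    iteratedDeriv (n + k) ((fun z => z ^ n) * ψ) 0 =
      (n + k).choose n * n.factorial * iteratedDeriv k ψ 0 := by
  rw [iteratedDeriv_mul (by fun_prop) hψ.contDiffAt, Finset.sum_eq_single n]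
  · rw [iteratedDeriv_pow, Nat.descFactorial_self]
    simp
  · intro i _ hi
    rw [iteratedDeriv_pow]
    rcases lt_or_gt_of_ne hi with hi | hi
    · simp [zero_pow (show n - i ≠ 0 by omega)]
    · simp [Nat.descFactorial_of_lt hi]
  · simp

lemma mem_taylorSubalgebra_of_pow_mul_eq (hφ : φ ∈ taylorSubalgebra K) (hψ : AnalyticAt ℂ ψ 0)
    (n : ℕ) (e : φ =ᶠ[𝓝 0] (fun z => z ^ n) * ψ) : ψ ∈ taylorSubalgebra K := by
  refine ⟨hψ, fun k => ?_⟩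
  have hne : ((n + k).choose n * n.factorial : ℂ) ≠ 0 := by
    exact_mod_cast (Nat.mul_pos (Nat.choose_pos (by omega)) n.factorial_pos).ne'
  rw [← mul_div_cancel_left₀ (iteratedDeriv k ψ 0) hne, ← iteratedDeriv_pow_mul_zero hψ,
    ← e.iteratedDeriv_eq]
  exact div_mem (hφ.2 _) (mul_mem (natCast_mem _ _) (natCast_mem _ _))

lemma eventually_eq_zero_of_iteratedDeriv_eq_zero (hψ : AnalyticAt ℂ ψ 0)
    (h0 : ∀ n, iteratedDeriv n ψ 0 = 0) : ψ =ᶠ[𝓝 0] 0 := by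
  change ∀ᶠ z in 𝓝 0, ψ z = 0
  rw [← analyticOrderAt_eq_top, ENat.eq_top_iff_forall_ge]
  exact fun n => (natCast_le_analyticOrderAt_iff_iteratedDeriv_eq_zero hψ).2 fun i _ => h0 i

/-! ### Power series -/

lemma hasFPowerSeriesOnBall_of_hasSum {a : ℕ → ℂ} {r : NNReal} (hr : 0 < r)
    (h : ∀ z : ℂ, ‖z‖ < r → HasSum (fun n => a n * z ^ n) (φ z)) :
    HasFPowerSeriesOnBall φ (FormalMultilinearSeries.ofScalars ℂ a) 0 r := by
  refine ⟨?_, by exact_mod_cast hr, fun {y} hy => ?_⟩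
  · refine ENNReal.le_of_forall_nnreal_lt fun s hs => ?_
    have hs' : ‖((s : ℝ) : ℂ)‖ < r := by simpa using hs
    exact FormalMultilinearSeries.le_radius_of_summable_norm _
      ((h _ hs').summable.norm.congr fun n => by simp)
  · have hy' : ‖y‖ < r := by simpa [enorm_eq_nnnorm] using hy
    simpa [FormalMultilinearSeries.ofScalars_apply_eq, mul_comm] using h y hy'

lemma iteratedDeriv_zero_of_hasFPowerSeriesAt {a : ℕ → ℂ}
    (h : HasFPowerSeriesAt φ (FormalMultilinearSeries.ofScalars ℂ a) 0) (n : ℕ) :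
    iteratedDeriv n φ 0 = n.factorial * a n := by
  have hcoeff := congrFun (FormalMultilinearSeries.ofScalars_series_injective ℂ ℂ
    (h.analyticAt.hasFPowerSeriesAt.eq_formalMultilinearSeries h)) n
  have hn : (n.factorial : ℂ) ≠ 0 := by exact_mod_cast n.factorial_ne_zero
  rw [← hcoeff]
  field_simp

lemma mem_taylorSubalgebra_of_hasFPowerSeriesAt {a : ℕ → K}
    (h : HasFPowerSeriesAt φ
      (FormalMultilinearSeries.ofScalars ℂ fun n => algebraMap K ℂ (a n)) 0) :
    φ ∈ taylorSubalgebra K :=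
  ⟨h.analyticAt, fun n => by
    rw [iteratedDeriv_zero_of_hasFPowerSeriesAt h]
    exact mul_mem (natCast_mem _ _) ⟨a n, rfl⟩⟩

lemma exists_hasFPowerSeriesAt_of_mem_taylorSubalgebra (hφ : φ ∈ taylorSubalgebra K) :
    ∃ a : ℕ → K, HasFPowerSeriesAt φ
      (FormalMultilinearSeries.ofScalars ℂ fun n => algebraMap K ℂ (a n)) 0 := by
  choose a ha using hφ.2
  refine ⟨fun n => a n / n.factorial, ?_⟩
  have coeff_eq : (fun n => algebraMap K ℂ (a n / n.factorial)) =
      fun n => iteratedDeriv n φ 0 / n.factorial := by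
    funext n
    rw [map_div₀, map_natCast, ← ha n]
  exact coeff_eq ▸ hφ.1.hasFPowerSeriesAt

lemma hasFPowerSeriesOnBall_tsum_mul_pow {ι : Type*} {c : ι → ℂ} {e : ι → ℕ}
    (hfin : ∀ n, {i | e i = n}.Finite)
    (hs : ∀ z : ℂ, ‖z‖ < 1 → Summable fun i => c i * z ^ e i) :
    HasFPowerSeriesOnBall (fun z => ∑' i, c i * z ^ e i)
      (FormalMultilinearSeries.ofScalars ℂ fun n => ∑ i ∈ (hfin n).toFinset, c i) 0 1 := by
  refine hasFPowerSeriesOnBall_of_hasSum (r := 1) one_pos fun z hz => ?_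
  have hsum := (hs z (by simpa using hz)).hasSum
  rw [← (Equiv.sigmaFiberEquiv e).hasSum_iff] at hsum
  refine hsum.sigma fun n => ?_
  have : Fintype {i // e i = n} := (hfin n).fintype
  convert hasSum_fintype (fun i : {i // e i = n} => c i * z ^ n) using 1
  · ext i
    simp [i.2]
  · rw [← Finset.sum_mul]
    exact congrArg (· * z ^ n) (Finset.sum_subtype (hfin n).toFinset (fun i => by simp) c)

end TaylorCoefficients

section LaurentExpansions

lemma qpow_one_eq_qParam (m : ℕ) (τ : ℍ) : qpow m 1 τ = Function.Periodic.qParam m τ := by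
  unfold qpow Function.Periodic.qParam
  congr 1
  push_cast
  ring

lemma qpow_eq_zpow (m : ℕ) (n : ℤ) (τ : ℍ) : qpow m n τ = qpow m 1 τ ^ n := by
  unfold qpow
  rw [← Complex.exp_int_mul]
  congr 1
  push_cast
  ring

lemma qpow_ne_zero (m : ℕ) (n : ℤ) (τ : ℍ) : qpow m n τ ≠ 0 := Complex.exp_ne_zero _

lemma qpow_zero (m : ℕ) (τ : ℍ) : qpow m 0 τ = 1 := by simp [qpow]

lemma qpow_add (m : ℕ) (a b : ℤ) (τ : ℍ) : qpow m (a + b) τ = qpow m a τ * qpow m b τ := by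
  rw [qpow_eq_zpow, zpow_add₀ (qpow_ne_zero _ _ _), ← qpow_eq_zpow, ← qpow_eq_zpow]

lemma qpow_neg (m : ℕ) (n : ℤ) (τ : ℍ) : qpow m (-n) τ = (qpow m n τ)⁻¹ := by
  rw [qpow_eq_zpow, _root_.zpow_neg, ← qpow_eq_zpow]

lemma qpow_natCast (m n : ℕ) (τ : ℍ) : qpow m n τ = qpow m 1 τ ^ n := by
  rw [qpow_eq_zpow, zpow_natCast]

lemma norm_qpow (m : ℕ) (n : ℤ) (τ : ℍ) :
    ‖qpow m n τ‖ = Real.exp (-(2 * π * τ.im * (n / m))) := by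
  have hre : (2 * (π : ℂ) * Complex.I * ((n : ℂ) / (m : ℂ)) * τ).re =
      -(2 * π * τ.im * (n / m)) := by
    have : 2 * (π : ℂ) * Complex.I * ((n : ℂ) / (m : ℂ)) * τ =
        ((2 * π * (n / m) : ℝ) : ℂ) * (Complex.I * τ) := by
      push_cast
      ring
    rw [this, re_ofReal_mul, Complex.I_mul_re, UpperHalfPlane.coe_im]
    ring
  rw [qpow, Complex.norm_exp, hre]

variable {m : ℕ}

lemma norm_qpow_one_lt_one (hm : 0 < m) (τ : ℍ) : ‖qpow m 1 τ‖ < 1 := by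
  rw [qpow_one_eq_qParam]
  exact Function.Periodic.norm_qParam_lt_one (by exact_mod_cast hm) τ.im_pos

lemma tendsto_qpow_one_atImInfty (hm : 0 < m) : Tendsto (qpow m 1) atImInfty (𝓝[≠] 0) := by
  refine ((Function.Periodic.qParam_tendsto (h := m) (by exact_mod_cast hm)).comp
    tendsto_coe_atImInfty).congr fun τ => ?_
  rw [qpow_one_eq_qParam, Function.comp_apply]

lemma tendsto_qpow_one_nhds_zero (hm : 0 < m) : Tendsto (qpow m 1) atImInfty (𝓝 0) :=
  (tendsto_qpow_one_atImInfty hm).mono_right nhdsWithin_le_nhds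

lemma norm_qpow_le_norm_qpow_one_neg_natAbs (hm : 0 < m) (n : ℤ) (τ : ℍ) :
    ‖qpow m n τ‖ ≤ ‖qpow 1 (-n.natAbs) τ‖ := by
  rw [norm_qpow, norm_qpow, Real.exp_le_exp, neg_le_neg_iff]
  refine mul_le_mul_of_nonneg_left ?_ (mul_nonneg Real.two_pi_pos.le τ.im_pos.le)
  have hm1 : (1 : ℝ) ≤ m := by exact_mod_cast hm
  push_cast
  calc -(|(n : ℝ)|) / 1 ≤ -(|(n : ℝ)| / m) := by
        rw [div_one, neg_le_neg_iff]
        exact div_le_self (abs_nonneg _) hm1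
    _ = -|(n / m : ℝ)| := by rw [abs_div, Nat.abs_cast]
    _ ≤ n / m := neg_abs_le _

variable {K : Type*} [Field K] [Algebra K ℂ] {F G : ℍ → ℂ}

lemma exists_eventuallyEq_qpow_mul_of_le {n k : ℤ} {φ : ℂ → ℂ} (hφ : φ ∈ taylorSubalgebra K)
    (hF : F =ᶠ[atImInfty] fun τ => qpow m n τ * φ (qpow m 1 τ)) (hkn : k ≤ n) :
    ∃ ψ ∈ taylorSubalgebra K, F =ᶠ[atImInfty] fun τ => qpow m k τ * ψ (qpow m 1 τ) := by
  obtain ⟨d, rfl⟩ := Int.exists_add_of_le hkn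
  refine ⟨(fun z => z) ^ d * φ, mul_mem (pow_mem id_mem_taylorSubalgebra d) hφ, ?_⟩
  filter_upwards [hF] with τ hτ
  simp only [Pi.mul_apply, Pi.pow_apply, hτ, qpow_add, qpow_natCast]
  ring

/-- The algebra of functions on `ℍ` which near `i∞` have a Laurent expansion in `q^{1/m}`, that is
`F = q^{n/m} φ(q^{1/m})` with `φ` analytic at `0`, with coefficients in `K`. -/
def laurentSubalgebra (K : Type*) [Field K] [Algebra K ℂ] (m : ℕ) : Subalgebra K (ℍ → ℂ) where
  carrier := {F | ∃ n : ℤ, ∃ φ ∈ taylorSubalgebra K,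
    F =ᶠ[atImInfty] fun τ => qpow m n τ * φ (qpow m 1 τ)}
  mul_mem' := by
    rintro F G ⟨n, φ, hφ, hF⟩ ⟨k, ψ, hψ, hG⟩
    refine ⟨n + k, φ * ψ, mul_mem hφ hψ, ?_⟩
    filter_upwards [hF, hG] with τ hFτ hGτ
    simp only [Pi.mul_apply, qpow_add, hFτ, hGτ]
    ring
  add_mem' := by
    rintro F G ⟨n, φ, hφ, hF⟩ ⟨k, ψ, hψ, hG⟩
    obtain ⟨φ', hφ', hF'⟩ :=
      exists_eventuallyEq_qpow_mul_of_le hφ hF (min_le_left n k)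
    obtain ⟨ψ', hψ', hG'⟩ :=
      exists_eventuallyEq_qpow_mul_of_le hψ hG (min_le_right n k)
    refine ⟨min n k, φ' + ψ', add_mem hφ' hψ', ?_⟩
    filter_upwards [hF', hG'] with τ hFτ hGτ
    simp only [Pi.add_apply, hFτ, hGτ, mul_add]
  algebraMap_mem' c := ⟨0, algebraMap K (ℂ → ℂ) c, algebraMap_mem _ c,
    Eventually.of_forall fun τ => by simp [qpow_zero]⟩

lemma laurentSubalgebra_congr (hF : F ∈ laurentSubalgebra K m) (e : F =ᶠ[atImInfty] G) :
    G ∈ laurentSubalgebra K m :=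
  let ⟨n, φ, hφ, hFφ⟩ := hF
  ⟨n, φ, hφ, e.symm.trans hFφ⟩

lemma comp_qpow_mem_laurentSubalgebra {φ : ℂ → ℂ} (hφ : φ ∈ taylorSubalgebra K) :
    (fun τ => φ (qpow m 1 τ)) ∈ laurentSubalgebra K m :=
  ⟨0, φ, hφ, Eventually.of_forall fun τ => by simp [qpow_zero]⟩

lemma mem_laurentSubalgebra_complex (hF : F ∈ laurentSubalgebra K m) :
    F ∈ laurentSubalgebra ℂ m :=
  let ⟨n, φ, hφ, hFφ⟩ := hF
  ⟨n, φ, mem_taylorSubalgebra_complex_iff.2 hφ.1, hFφ⟩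

lemma eventually_eq_zero_or_leading_term (hm : 0 < m) (hF : F ∈ laurentSubalgebra K m) :
    F =ᶠ[atImInfty] 0 ∨ ∃ n : ℤ, ∃ φ ∈ taylorSubalgebra K, φ 0 ≠ 0 ∧
      F =ᶠ[atImInfty] fun τ => qpow m n τ * φ (qpow m 1 τ) := by
  obtain ⟨n, φ, hφ, hFφ⟩ := hF
  have hq := tendsto_qpow_one_nhds_zero hm
  by_cases h0 : ∀ᶠ z in 𝓝 0, φ z = 0
  · left
    filter_upwards [hFφ, hq.eventually h0] with τ hFτ hφτ
    rw [hFτ, hφτ, mul_zero, Pi.zero_apply]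
  · right
    obtain ⟨k, ψ, hψ, hψ0, e⟩ := hφ.1.exists_eventuallyEq_pow_smul_nonzero_iff.mpr h0
    simp only [sub_zero, smul_eq_mul] at e
    refine ⟨n + k, ψ, mem_taylorSubalgebra_of_pow_mul_eq hφ hψ k e, hψ0, ?_⟩
    filter_upwards [hFφ, hq.eventually e] with τ hFτ hφτ
    rw [hFτ, hφτ, qpow_add, qpow_natCast, mul_assoc]

lemma eventually_eq_zero_or_eventually_ne_zero (hm : 0 < m) (hF : F ∈ laurentSubalgebra K m) :
    F =ᶠ[atImInfty] 0 ∨ ∀ᶠ τ in atImInfty, F τ ≠ 0 := by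
  refine (eventually_eq_zero_or_leading_term hm hF).imp_right ?_
  rintro ⟨n, φ, hφ, h0, hFφ⟩
  filter_upwards [hFφ, (tendsto_qpow_one_nhds_zero hm).eventually
    (hφ.1.continuousAt.eventually_ne h0)] with τ hFτ hφτ
  rw [hFτ]
  exact mul_ne_zero (qpow_ne_zero _ _ _) hφτ

lemma inv_mem_laurentSubalgebra (hm : 0 < m) (hF : F ∈ laurentSubalgebra K m) :
    F⁻¹ ∈ laurentSubalgebra K m := by
  rcases eventually_eq_zero_or_leading_term hm hF with h | ⟨n, φ, hφ, h0, hFφ⟩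
  · refine laurentSubalgebra_congr (zero_mem _) ?_
    filter_upwards [h] with τ hτ
    simp [hτ]
  · refine ⟨-n, φ⁻¹, inv_mem_taylorSubalgebra hφ h0, ?_⟩
    filter_upwards [hFφ] with τ hτ
    simp only [Pi.inv_apply, hτ, mul_inv, qpow_neg]

lemma div_mem_laurentSubalgebra (hm : 0 < m) (hF : F ∈ laurentSubalgebra K m)
    (hG : G ∈ laurentSubalgebra K m) : F / G ∈ laurentSubalgebra K m :=
  div_eq_mul_inv F G ▸ mul_mem hF (inv_mem_laurentSubalgebra hm hG)

lemma exists_isBigO_qpow_one (hm : 0 < m) (hF : F ∈ laurentSubalgebra K m) :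
    ∃ k : ℕ, F =O[atImInfty] qpow 1 (-k) := by
  obtain ⟨n, φ, hφ, hFφ⟩ := hF
  have hφ1 : (fun τ => φ (qpow m 1 τ)) =O[atImInfty] fun _ => (1 : ℂ) :=
    (hφ.1.continuousAt.tendsto.comp (tendsto_qpow_one_nhds_zero hm)).isBigO_one ℂ
  refine ⟨n.natAbs, hFφ.trans_isBigO ?_⟩
  refine ((Asymptotics.isBigO_refl (qpow m n) _).mul hφ1).trans ?_
  simp only [mul_one]
  refine .of_bound 1 (Eventually.of_forall fun τ => ?_)
  rw [one_mul]
  exact norm_qpow_le_norm_qpow_one_neg_natAbs hm n τ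

/-! ### Comparison with convergent series in `q^{1/m}` -/

lemma hasSum_qpow_iff {c : ℕ → ℂ} {n : ℤ} {τ : ℍ} {w : ℂ} :
    HasSum (fun i : ℕ => c i * qpow m (n + i) τ) (qpow m n τ * w) ↔
      HasSum (fun i => c i * qpow m 1 τ ^ i) w := by
  rw [← hasSum_mul_left_iff (f := fun i => c i * qpow m 1 τ ^ i) (qpow_ne_zero m n τ)]
  simp only [qpow_add, qpow_natCast, mul_left_comm]

lemma mem_laurentSubalgebra_of_hasSum {A : ℝ} {n : ℤ} {c : ℕ → K}
    (h : ∀ τ : ℍ, A < τ.im →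
      HasSum (fun i : ℕ => algebraMap K ℂ (c i) * qpow m (n + i) τ) (F τ)) :
    F ∈ laurentSubalgebra K m := by
  have hsum : ∀ τ : ℍ, A < τ.im →
      HasSum (fun i => algebraMap K ℂ (c i) * qpow m 1 τ ^ i) ((qpow m n τ)⁻¹ * F τ) :=
    fun τ hτ => hasSum_qpow_iff.1 <| by
      rw [mul_inv_cancel_left₀ (qpow_ne_zero m n τ)]
      exact h τ hτ
  set p := FormalMultilinearSeries.ofScalars ℂ fun i => algebraMap K ℂ (c i) with hp
  obtain ⟨τ₀, hτ₀⟩ : ∃ τ : ℍ, A < τ.im :=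
    ⟨⟨⟨0, max A 0 + 1⟩, by positivity⟩, (le_max_left A 0).trans_lt (lt_add_one _)⟩
  have radius_pos : 0 < p.radius := by
    refine lt_of_lt_of_le (b := (‖qpow m 1 τ₀‖₊ : ENNReal)) (by simpa using qpow_ne_zero _ _ _) ?_
    exact p.le_radius_of_summable_norm ((hsum τ₀ hτ₀).summable.norm.congr fun i => by simp [hp])
  refine ⟨n, p.sum, mem_taylorSubalgebra_of_hasFPowerSeriesAt
    (p.hasFPowerSeriesOnBall radius_pos).hasFPowerSeriesAt, ?_⟩
  filter_upwards [(atImInfty_mem _).mpr ⟨A + 1, fun τ hτ => hτ⟩] with τ (hτ : A + 1 ≤ τ.im)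
  have sum_eq : p.sum (qpow m 1 τ) = (qpow m n τ)⁻¹ * F τ := by
    rw [← (hsum τ (by linarith)).tsum_eq]
    exact tsum_congr fun i => FormalMultilinearSeries.ofScalars_apply_eq _ _ i
  rw [sum_eq, mul_inv_cancel_left₀ (qpow_ne_zero m n τ)]

lemma exists_hasSum_of_mem_laurentSubalgebra (hm : 0 < m) (hF : F ∈ laurentSubalgebra K m) :
    ∃ A : ℝ, ∃ n : ℤ, ∃ c : ℕ → K, ∀ τ : ℍ, A < τ.im →
      HasSum (fun i : ℕ => algebraMap K ℂ (c i) * qpow m (n + i) τ) (F τ) := by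
  obtain ⟨n, φ, hφ, hFφ⟩ := hF
  obtain ⟨c, hc⟩ := exists_hasFPowerSeriesAt_of_mem_taylorSubalgebra hφ
  obtain ⟨A, hA⟩ := (atImInfty_mem _).mp
    (hFφ.and ((tendsto_qpow_one_nhds_zero hm).eventually hc.eventually_hasSum))
  refine ⟨A, n, c, fun τ hτ => ?_⟩
  obtain ⟨hFτ, hφτ⟩ := hA τ hτ.le
  rw [hFτ, hasSum_qpow_iff]
  simpa only [zero_add, FormalMultilinearSeries.ofScalars_apply_eq, smul_eq_mul] using hφτ

end LaurentExpansions

section ModularInvariant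

/-! ### The modular invariant -/

lemma tsum_lat_eq_tsum_eisSummand (τ : ℍ) {k : ℕ} (hk : k ≠ 0) :
    ∑' p : {p : ℤ × ℤ // p ≠ 0}, ((lat τ p.1) ^ k)⁻¹ =
      ∑' v : Fin 2 → ℤ, EisensteinSeries.eisSummand k v τ := by
  have drop_zero : ∑' p : {p : ℤ × ℤ // p ≠ 0}, ((lat τ p.1) ^ k)⁻¹ =
      ∑' p : ℤ × ℤ, ((lat τ p) ^ k)⁻¹ := by
    refine tsum_subtype_eq_of_support_subset (f := fun p => ((lat τ p) ^ k)⁻¹)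
      (s := {p : ℤ × ℤ | p ≠ 0}) fun p hp (hp0 : p = 0) => hp ?_
    simp [hp0, lat, hk]
  rw [drop_zero, ← (finTwoArrowEquiv ℤ).tsum_eq]
  exact tsum_congr fun v => by simp [EisensteinSeries.eisSummand, lat, finTwoArrowEquiv]

lemma tsum_lat_eq_riemannZeta_mul_E (τ : ℍ) {k : ℕ} (hk : 3 ≤ k) :
    ∑' p : {p : ℤ × ℤ // p ≠ 0}, ((lat τ p.1) ^ k)⁻¹ =
      2 * riemannZeta k * ModularForm.E hk τ := by
  have E_eq : ModularForm.E hk τ = (1 / 2 : ℂ) * eisensteinSeries (N := 1) 0 k τ := rfl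
  rw [tsum_lat_eq_tsum_eisSummand τ (by omega),
    _root_.tsum_eisSummand_eq_riemannZeta_mul_eisensteinSeries hk, E_eq]
  ring

lemma bernoulli_six : bernoulli 6 = 1 / 42 := by
  have bernoulli'_five : bernoulli' 5 = 0 := bernoulli'_eq_zero_of_odd (by decide) (by norm_num)
  rw [bernoulli_eq_bernoulli'_of_ne_one (by norm_num), bernoulli'_def]
  norm_num [bernoulli'_five, Finset.sum_range_succ, Nat.choose, bernoulli'_two, bernoulli'_three,
    bernoulli'_four]

lemma riemannZeta_six : riemannZeta 6 = π ^ 6 / 945 := by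
  have h := riemannZeta_two_mul_nat (k := 3) (by norm_num)
  norm_num [bernoulli_six, Nat.factorial] at h
  rw [h]
  ring

lemma g2C_eq (τ : ℍ) : g2C τ = 4 / 3 * (π : ℂ) ^ 4 * ModularForm.E₄ τ := by
  rw [g2C, tsum_lat_eq_riemannZeta_mul_E τ (k := 4) (by norm_num), Nat.cast_ofNat,
    riemannZeta_four]
  ring

lemma g3C_eq (τ : ℍ) : g3C τ = 8 / 27 * (π : ℂ) ^ 6 * ModularForm.E₆ τ := by
  rw [g3C, tsum_lat_eq_riemannZeta_mul_E τ (k := 6) (by norm_num), Nat.cast_ofNat,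
    riemannZeta_six]
  ring

lemma discC_eq (τ : ℍ) : discC τ = 4096 * (π : ℂ) ^ 12 * ModularForm.discriminant τ := by
  rw [discC, g2C_eq, g3C_eq, ModularForm.discriminant_eq_E₄_cube_sub_E₆_sq]
  ring

lemma discC_ne_zero (τ : ℍ) : discC τ ≠ 0 := by
  rw [discC_eq]
  exact mul_ne_zero (by simp [Real.pi_ne_zero]) (ModularForm.discriminant_ne_zero τ)

/-- The factor `E₄E₆/Δ` of weight `-2` by which the Fricke functions are normalised, see
`fricke_eq`. -/
def frickeFactor : ℍ → ℂ := ModularForm.E₄ * ModularForm.E₆ / ModularForm.discriminant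

lemma jinv_eq : jinv = ModularForm.E₄ ^ 3 / ModularForm.discriminant := by
  ext τ
  have hΔ := ModularForm.discriminant_ne_zero τ
  have hπ : (π : ℂ) ≠ 0 := by exact_mod_cast Real.pi_ne_zero
  rw [jinv, discC_eq, g2C_eq, Pi.div_apply, Pi.pow_apply]
  field_simp
  ring

lemma fricke_eq (r : ℚ × ℚ) (τ : ℍ) : fricke r τ =
    12 * frickeFactor τ * (wpC ((r.1 : ℂ) * τ + (r.2 : ℂ)) τ / (2 * π * Complex.I) ^ 2) := by
  have hΔ := ModularForm.discriminant_ne_zero τ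
  have hπ : (π : ℂ) ≠ 0 := by exact_mod_cast Real.pi_ne_zero
  have two_pi_I_sq : (2 * π * Complex.I) ^ 2 = -(4 * (π : ℂ) ^ 2) := by
    rw [mul_pow, Complex.I_sq]
    ring
  rw [fricke, discC_eq, g2C_eq, g3C_eq, two_pi_I_sq, frickeFactor, Pi.div_apply, Pi.mul_apply]
  field_simp
  ring

/-! ### Modularity -/

lemma E_smul {k : ℕ} (hk : 3 ≤ k) (γ : SL(2, ℤ)) (τ : ℍ) :
    ModularForm.E hk (γ • τ) = denom γ τ ^ (k : ℤ) * ModularForm.E hk τ :=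
  SlashInvariantForm.slash_action_eqn'' (ModularForm.E hk)
    (γ := SpecialLinearGroup.mapGL ℝ γ) (MonoidHom.mem_range.2 ⟨γ, rfl⟩) τ

lemma g2C_smul (γ : SL(2, ℤ)) (τ : ℍ) : g2C (γ • τ) = denom γ τ ^ 4 * g2C τ := by
  rw [g2C_eq, g2C_eq, E_smul, zpow_natCast]
  ring

lemma g3C_smul (γ : SL(2, ℤ)) (τ : ℍ) : g3C (γ • τ) = denom γ τ ^ 6 * g3C τ := by
  rw [g3C_eq, g3C_eq, E_smul, zpow_natCast]
  ring

lemma discC_smul (γ : SL(2, ℤ)) (τ : ℍ) : discC (γ • τ) = denom γ τ ^ 12 * discC τ := by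
  rw [discC, discC, g2C_smul, g3C_smul]
  ring

lemma jinv_smul (γ : SL(2, ℤ)) (τ : ℍ) : jinv (γ • τ) = jinv τ := by
  have hd : denom γ τ ≠ 0 := denom_ne_zero _ _
  have hΔ := discC_ne_zero τ
  rw [jinv, jinv, g2C_smul, discC_smul]
  field_simp

/-! ### Expansions at the cusp -/

lemma qpow_mul_mul {m : ℕ} (hm : 0 < m) (k : ℕ) (n : ℤ) (τ : ℍ) :
    qpow (m * k) (m * n) τ = qpow k n τ := by
  have hm' : (m : ℂ) ≠ 0 := by exact_mod_cast hm.ne'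
  unfold qpow
  congr 2
  push_cast
  rw [mul_div_mul_left _ _ hm']

lemma mem_laurentSubalgebra_of_one {K : Type*} [Field K] [Algebra K ℂ] {m : ℕ} (hm : 0 < m)
    {F : ℍ → ℂ} (hF : F ∈ laurentSubalgebra K 1) : F ∈ laurentSubalgebra K m := by
  obtain ⟨A, n, c, hc⟩ := exists_hasSum_of_mem_laurentSubalgebra one_pos hF
  refine mem_laurentSubalgebra_of_hasSum (A := A) (n := m * n)
    (c := fun i => if m ∣ i then c (i / m) else 0) fun τ hτ => ?_
  rw [← (mul_right_injective₀ hm.ne').hasSum_iff]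
  · refine (hc τ hτ).congr_fun fun i => ?_
    rw [← qpow_mul_mul hm 1]
    simp only [Function.comp_apply, dvd_mul_right, if_true, Nat.mul_div_cancel_left i hm, mul_one,
      mul_add, Nat.cast_mul]
  · intro i hi
    have not_dvd : ¬ m ∣ i := fun ⟨l, hl⟩ => hi ⟨l, hl.symm⟩
    simp [not_dvd]

lemma E_mem_laurentSubalgebra {k : ℕ} (hk : 3 ≤ k) (hk2 : Even k) :
    (ModularForm.E hk : ℍ → ℂ) ∈ laurentSubalgebra ℚ 1 := by
  refine mem_laurentSubalgebra_of_hasSum (A := 0) (n := 0)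
    (c := fun n =>
      if n = 0 then 1 else -(2 * k / bernoulli k) * ArithmeticFunction.sigma (k - 1) n)
    fun τ _ => ?_
  have hsum := UpperHalfPlane.hasSum_qExpansion (f := ModularForm.E hk) (h := 1) one_pos
    (SlashInvariantFormClass.periodic_comp_ofComplex _ one_mem_strictPeriods_SL)
    (ModularFormClass.holo _) (ModularFormClass.bdd_at_infty _) τ
  refine hsum.congr_fun fun n => ?_
  rw [EisensteinSeries.E_qExpansion_coeff hk hk2, zero_add, qpow_natCast, qpow_one_eq_qParam]
  split_ifs <;> simp

lemma discriminant_eq :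
    ModularForm.discriminant =
      (1 / 1728 : ℚ) • ((ModularForm.E₄ ^ 3 - ModularForm.E₆ ^ 2 : ℍ → ℂ)) := by
  ext τ
  rw [ModularForm.discriminant_eq_E₄_cube_sub_E₆_sq]
  simp [Algebra.smul_def]
  ring

lemma E₄_mem_laurentSubalgebra : (ModularForm.E₄ : ℍ → ℂ) ∈ laurentSubalgebra ℚ 1 :=
  E_mem_laurentSubalgebra _ (by decide)

lemma E₆_mem_laurentSubalgebra : (ModularForm.E₆ : ℍ → ℂ) ∈ laurentSubalgebra ℚ 1 :=
  E_mem_laurentSubalgebra _ (by decide)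

lemma discriminant_mem_laurentSubalgebra : ModularForm.discriminant ∈ laurentSubalgebra ℚ 1 :=
  discriminant_eq ▸ Subalgebra.smul_mem _ (sub_mem (pow_mem E₄_mem_laurentSubalgebra 3)
    (pow_mem E₆_mem_laurentSubalgebra 2)) _

lemma jinv_mem_laurentSubalgebra : jinv ∈ laurentSubalgebra ℚ 1 :=
  jinv_eq ▸ div_mem_laurentSubalgebra one_pos (pow_mem E₄_mem_laurentSubalgebra 3)
    discriminant_mem_laurentSubalgebra

lemma frickeFactor_mem_laurentSubalgebra : frickeFactor ∈ laurentSubalgebra ℚ 1 :=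
  div_mem_laurentSubalgebra one_pos (mul_mem E₄_mem_laurentSubalgebra E₆_mem_laurentSubalgebra)
    discriminant_mem_laurentSubalgebra

lemma tendsto_E_atImInfty {k : ℕ} (hk : 3 ≤ k) (hk2 : Even k) :
    Tendsto (ModularForm.E hk) atImInfty (𝓝 1) := by
  have analyticAt_cusp := ModularFormClass.analyticAt_cuspFunction_zero (ModularForm.E hk) one_pos
    one_mem_strictPeriods_SL
  have value_at_cusp : cuspFunction 1 (ModularForm.E hk) 0 = 1 := by
    simpa [UpperHalfPlane.qExpansion_coeff] using EisensteinSeries.E_qExpansion_coeff hk hk2 0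
  rw [← value_at_cusp]
  refine (analyticAt_cusp.continuousAt.tendsto.comp (qParam_tendsto_atImInfty one_pos)).congr
    fun τ => ?_
  exact SlashInvariantFormClass.eq_cuspFunction _ τ one_mem_strictPeriods_SL one_ne_zero

lemma tendsto_discriminant_mul_qpow :
    Tendsto (ModularForm.discriminant * qpow 1 (-1)) atImInfty (𝓝 1) := by
  refine ModularForm.tendsto_atImInfty_tprod_one_sub_eta_q_pow.congr fun τ => ?_
  have qParam_eq : Function.Periodic.qParam 1 τ = qpow 1 1 τ := by
    rw [qpow_one_eq_qParam, Nat.cast_one]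
  rw [Pi.mul_apply, qpow_neg, ModularForm.discriminant_eq_q_prod, qParam_eq, mul_right_comm,
    mul_inv_cancel₀ (qpow_ne_zero 1 1 τ), one_mul]

lemma tendsto_div_discriminant_mul_qpow {F : ℍ → ℂ} (hF : Tendsto F atImInfty (𝓝 1)) :
    Tendsto (F / ModularForm.discriminant * qpow 1 1) atImInfty (𝓝 1) := by
  have h := hF.div tendsto_discriminant_mul_qpow one_ne_zero
  rw [div_one] at h
  refine h.congr fun τ => ?_
  simp only [Pi.div_apply, Pi.mul_apply, qpow_neg, div_mul_eq_div_div, div_inv_eq_mul]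

lemma tendsto_jinv_mul_qpow : Tendsto (jinv * qpow 1 1) atImInfty (𝓝 1) := by
  rw [jinv_eq]
  refine tendsto_div_discriminant_mul_qpow ?_
  rw [← one_pow 3]
  exact (tendsto_E_atImInfty (k := 4) (by norm_num) (by decide)).pow 3

lemma tendsto_frickeFactor_mul_qpow : Tendsto (frickeFactor * qpow 1 1) atImInfty (𝓝 1) := by
  refine tendsto_div_discriminant_mul_qpow ?_
  rw [← one_mul (1 : ℂ)]
  exact (tendsto_E_atImInfty (k := 4) (by norm_num) (by decide)).mul
    (tendsto_E_atImInfty (k := 6) (by norm_num) (by decide))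

lemma tendsto_jinv_cobounded : Tendsto jinv atImInfty (Bornology.cobounded ℂ) := by
  have inv_qpow_atTop := tendsto_norm_cobounded_atTop.comp
    (tendsto_inv₀_nhdsNE_zero.comp (tendsto_qpow_one_atImInfty one_pos))
  rw [← tendsto_norm_atTop_iff_cobounded]
  refine (tendsto_jinv_mul_qpow.norm.pos_mul_atTop (by simp) inv_qpow_atTop).congr fun τ => ?_
  simp only [Function.comp_apply, ← norm_mul, Pi.mul_apply,
    mul_inv_cancel_right₀ (qpow_ne_zero 1 1 τ)]

/-! ### Holomorphy -/

/-- The algebra of holomorphic functions on the upper half-plane. -/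
def holomorphicSubalgebra : Subalgebra ℂ (ℍ → ℂ) where
  carrier := {F | MDifferentiable 𝓘(ℂ) 𝓘(ℂ) F}
  mul_mem' hF hG := hF.mul hG
  add_mem' hF hG := hF.add hG
  algebraMap_mem' _ := mdifferentiable_const

lemma div_mem_holomorphicSubalgebra {F G : ℍ → ℂ} (hF : F ∈ holomorphicSubalgebra)
    (hG : G ∈ holomorphicSubalgebra) (h0 : ∀ τ, G τ ≠ 0) : F / G ∈ holomorphicSubalgebra :=
  UpperHalfPlane.mdifferentiable_iff.2 <|
    (UpperHalfPlane.mdifferentiable_iff.1 hF).div (UpperHalfPlane.mdifferentiable_iff.1 hG)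
      fun _ _ => h0 _

lemma E_mem_holomorphicSubalgebra {k : ℕ} (hk : 3 ≤ k) :
    (ModularForm.E hk : ℍ → ℂ) ∈ holomorphicSubalgebra :=
  (ModularForm.E hk).holo'

lemma discriminant_mem_holomorphicSubalgebra :
    ModularForm.discriminant ∈ holomorphicSubalgebra :=
  CuspForm.discriminant.holo'

lemma jinv_mem_holomorphicSubalgebra : jinv ∈ holomorphicSubalgebra :=
  jinv_eq ▸ div_mem_holomorphicSubalgebra (pow_mem (E_mem_holomorphicSubalgebra _) 3)
    discriminant_mem_holomorphicSubalgebra ModularForm.discriminant_ne_zero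

lemma frickeFactor_mem_holomorphicSubalgebra : frickeFactor ∈ holomorphicSubalgebra :=
  div_mem_holomorphicSubalgebra
    (mul_mem (E_mem_holomorphicSubalgebra _) (E_mem_holomorphicSubalgebra _))
    discriminant_mem_holomorphicSubalgebra ModularForm.discriminant_ne_zero

end ModularInvariant

section WeierstrassFunction

/-! ### The Weierstrass function -/

/-- The period pair `(τ, 1)`, spanning the lattice `L_τ = ℤτ + ℤ`. -/
def periodPair (τ : ℍ) : PeriodPair where
  ω₁ := τ
  ω₂ := 1
  indep := LinearIndependent.pair_iff.2 fun s t h => by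
    have hs : s = 0 := by simpa [τ.im_ne_zero] using congrArg Complex.im h
    subst hs
    simpa using h

lemma coe_latticeEquivProd_symm (τ : ℍ) (p : ℤ × ℤ) :
    (((periodPair τ).latticeEquivProd.symm p : (periodPair τ).lattice) : ℂ) = lat τ p := by
  rw [PeriodPair.latticeEquiv_symm_apply]
  simp [lat, periodPair]

lemma hasSum_weierstrassP_lat (z : ℂ) (τ : ℍ) :
    HasSum (fun p : ℤ × ℤ => ((z - lat τ p) ^ 2)⁻¹ - ((lat τ p) ^ 2)⁻¹)
      ((periodPair τ).weierstrassP z) := by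
  have h := ((periodPair τ).latticeEquivProd.symm.toEquiv.hasSum_iff).2
    ((periodPair τ).hasSum_weierstrassP z)
  refine h.congr_fun fun p => ?_
  simp [← coe_latticeEquivProd_symm]

lemma wpC_eq_weierstrassP (z : ℂ) (τ : ℍ) : wpC z τ = (periodPair τ).weierstrassP z := by
  have hsum := hasSum_weierstrassP_lat z τ
  have lat_zero : lat τ 0 = 0 := by simp [lat]
  rw [wpC, ← hsum.tsum_eq, hsum.summable.tsum_eq_add_tsum_ite 0]
  congr 1
  · simp [lat_zero]
  · rw [← tsum_subtype_eq_of_support_subset (s := {p : ℤ × ℤ | p ≠ 0})]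
    · exact tsum_congr fun p => (if_neg p.2).symm
    · exact fun p hp (hp0 : p = 0) => hp (by simp [hp0])

lemma hasSum_wpC (z : ℂ) (τ : ℍ) :
    HasSum (fun p : ℤ × ℤ => ((z - lat τ p) ^ 2)⁻¹ - ((lat τ p) ^ 2)⁻¹) (wpC z τ) :=
  wpC_eq_weierstrassP z τ ▸ hasSum_weierstrassP_lat z τ

lemma wpC_add_lat (z : ℂ) (τ : ℍ) (p : ℤ × ℤ) : wpC (z + lat τ p) τ = wpC z τ := by
  rw [wpC_eq_weierstrassP, wpC_eq_weierstrassP, ← coe_latticeEquivProd_symm,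
    PeriodPair.weierstrassP_add_coe]

/-! ### Modularity of the Fricke functions -/

/-- Right multiplication by `γ ∈ SL₂(ℤ)` on row vectors, as a permutation of the index set `ℤ²` of
the lattice. -/
def vecMulEquiv (γ : SL(2, ℤ)) : ℤ × ℤ ≃ ℤ × ℤ where
  toFun p := (p.1 * γ 0 0 + p.2 * γ 1 0, p.1 * γ 0 1 + p.2 * γ 1 1)
  invFun p := (p.1 * γ 1 1 - p.2 * γ 1 0, -p.1 * γ 0 1 + p.2 * γ 0 0)
  left_inv p := by
    have det_eq := Matrix.det_fin_two γ.1
    rw [γ.2] at det_eq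
    ext
    · linear_combination (-p.1) * det_eq
    · linear_combination (-p.2) * det_eq
  right_inv p := by
    have det_eq := Matrix.det_fin_two γ.1
    rw [γ.2] at det_eq
    ext
    · linear_combination (-p.1) * det_eq
    · linear_combination (-p.2) * det_eq

lemma mul_smul_add_eq_div_denom (γ : SL(2, ℤ)) (τ : ℍ) (x y : ℂ) :
    x * ((γ • τ : ℍ) : ℂ) + y =
      ((x * γ 0 0 + y * γ 1 0) * τ + (x * γ 0 1 + y * γ 1 1)) / denom γ τ := by
  have denom_eq : denom γ τ = (γ 1 0 : ℂ) * τ + γ 1 1 := by simp [denom]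
  have hd : denom γ τ ≠ 0 := denom_ne_zero _ _
  rw [UpperHalfPlane.coe_specialLinearGroup_apply, eq_div_iff hd]
  rw [denom_eq] at hd ⊢
  simp only [algebraMap_int_eq, eq_intCast, Complex.ofReal_intCast]
  rw [add_mul, mul_assoc, div_mul_cancel₀ _ hd]
  ring

lemma lat_smul (γ : SL(2, ℤ)) (τ : ℍ) (p : ℤ × ℤ) :
    lat (γ • τ) p = lat τ (vecMulEquiv γ p) / denom γ τ := by
  rw [lat, mul_smul_add_eq_div_denom]
  simp [lat, vecMulEquiv]

lemma wpC_smul (γ : SL(2, ℤ)) (τ : ℍ) (z : ℂ) :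
    wpC (z / denom γ τ) (γ • τ) = denom γ τ ^ 2 * wpC z τ := by
  rw [← (hasSum_wpC _ _).tsum_eq, ← (hasSum_wpC z τ).tsum_eq, ← (vecMulEquiv γ).tsum_eq
    fun p => ((z - lat τ p) ^ 2)⁻¹ - ((lat τ p) ^ 2)⁻¹, ← tsum_mul_left]
  refine tsum_congr fun p => ?_
  rw [lat_smul, ← sub_div, div_pow, div_pow, inv_div, inv_div]
  ring

lemma fricke_smul (γ : SL(2, ℤ)) (τ : ℍ) (r : ℚ × ℚ) :
    fricke r (γ • τ) = fricke (tAct γ r) τ := by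
  have hd : denom γ τ ≠ 0 := denom_ne_zero _ _
  have hΔ := discC_ne_zero τ
  have arg_eq : ((r.1 : ℂ) * γ 0 0 + r.2 * γ 1 0) * τ + (r.1 * γ 0 1 + r.2 * γ 1 1) =
      ((tAct γ r).1 : ℂ) * τ + ((tAct γ r).2 : ℂ) := by
    simp only [tAct]
    push_cast
    ring
  rw [fricke, fricke, g2C_smul, g3C_smul, discC_smul, mul_smul_add_eq_div_denom, wpC_smul, arg_eq]
  field_simp

lemma fricke_add_int (r : ℚ × ℚ) (a b : ℤ) : fricke (r.1 + a, r.2 + b) = fricke r := by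
  ext τ
  rw [fricke, fricke, ← wpC_add_lat ((r.1 : ℂ) * τ + r.2) τ (a, b), lat]
  push_cast
  ring_nf

end WeierstrassFunction

section LatticeRows

/-! ### Lattice sums row by row -/

/-- The sum of `(u + n)⁻²` over the integers, i.e. the contribution of one row of the lattice to the
Weierstrass function. -/
def rowSum (u : ℂ) : ℂ := ∑' n : ℤ, ((u + n) ^ 2)⁻¹

lemma summable_rowSum (u : ℂ) : Summable fun n : ℤ => ((u + n) ^ 2)⁻¹ := by
  refine (EisensteinSeries.linear_right_summable u 1 (k := 2) le_rfl).congr fun n => ?_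
  norm_cast
  simp

lemma rowSum_neg (u : ℂ) : rowSum (-u) = rowSum u := by
  rw [rowSum, rowSum, ← (Equiv.neg ℤ).tsum_eq]
  refine tsum_congr fun n => ?_
  rw [Equiv.neg_apply, Int.cast_neg, ← neg_add, neg_sq]

lemma rowSum_zero : rowSum 0 = π ^ 2 / 3 := by
  have hzeta := zeta_nat_eq_tsum_of_gt_one (k := 2) one_lt_two
  rw [Nat.cast_ofNat, riemannZeta_two] at hzeta
  have hsum : HasSum (fun n : ℕ => 2 * (1 / (n : ℂ) ^ 2)) (rowSum 0) := by
    simpa [rowSum, two_mul] using (summable_rowSum 0).hasSum.nat_add_neg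
  rw [← hsum.tsum_eq, tsum_mul_left, ← hzeta]
  ring

lemma rowSum_ofReal_ne_zero (x : ℝ) : rowSum x ≠ 0 := by
  have summable_real : Summable fun n : ℤ => ((x + n) ^ 2)⁻¹ :=
    Complex.summable_ofReal.1 ((summable_rowSum x).congr fun n => by push_cast; rfl)
  have rowSum_eq : rowSum x = ((∑' n : ℤ, ((x + n) ^ 2)⁻¹ : ℝ) : ℂ) := by
    rw [rowSum, Complex.ofReal_tsum]
    exact tsum_congr fun n => by push_cast; rfl
  obtain ⟨i, hi⟩ : ∃ i : ℤ, x + i ≠ 0 := by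
    by_cases hx : x = 0
    · exact ⟨1, by simp [hx]⟩
    · exact ⟨0, by simpa using hx⟩
  have sum_pos : 0 < ∑' n : ℤ, ((x + n) ^ 2)⁻¹ :=
    summable_real.tsum_pos (fun n => by positivity) i (by positivity)
  rw [rowSum_eq]
  exact_mod_cast sum_pos.ne'

lemma rowSum_div_eq_tsum (u : ℂ) (hu : 0 < u.im) :
    rowSum u / (2 * π * Complex.I) ^ 2 =
      ∑' l : ℕ+, (l : ℂ) * Complex.exp (2 * π * Complex.I * u) ^ (l : ℕ) := by
  have lipschitz := EisensteinSeries.qExpansion_identity_pnat (k := 1) le_rfl ⟨u, hu⟩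
  simp only [pow_one, Nat.factorial_one, Nat.cast_one, div_one, one_div] at lipschitz
  have rowSum_eq : rowSum u = (-2 * π * Complex.I) ^ (1 + 1) *
      ∑' l : ℕ+, (l : ℂ) * Complex.exp (2 * π * Complex.I * u) ^ (l : ℕ) := lipschitz
  have two_pi_I_sq_ne_zero : (2 * π * Complex.I) ^ 2 ≠ 0 := pow_ne_zero 2 Complex.two_pi_I_ne_zero
  rw [rowSum_eq, div_eq_iff two_pi_I_sq_ne_zero]
  ring

lemma hasSum_lattice_row (z : ℂ) (τ : ℍ) (k : ℤ) :
    HasSum (fun n : ℤ => ((z - lat τ (k, n)) ^ 2)⁻¹ - ((lat τ (k, n)) ^ 2)⁻¹)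
      (rowSum (z - k * τ) - rowSum (k * τ)) := by
  refine HasSum.sub ?_ (summable_rowSum (k * τ)).hasSum
  refine ((Equiv.neg ℤ).hasSum_iff.2 (summable_rowSum (z - k * τ)).hasSum).congr_fun fun n => ?_
  simp only [Function.comp, Equiv.neg_apply, lat, Int.cast_neg]
  ring_nf

lemma hasSum_rowSum (z : ℂ) (τ : ℍ) :
    HasSum (fun k : ℕ+ => rowSum (k * τ - z) + rowSum (k * τ + z) - 2 * rowSum (k * τ))
      (wpC z τ - (rowSum z - π ^ 2 / 3)) := by
  have hrows := ((hasSum_wpC z τ).prod_fiberwise (hasSum_lattice_row z τ)).nat_add_neg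
  have hrows_pos := (hasSum_nat_add_iff' 1).2 hrows
  simp only [Finset.range_one, Finset.sum_singleton, Int.cast_natCast, Int.cast_neg, Nat.cast_zero,
    Int.cast_zero, neg_zero, zero_mul, sub_zero, rowSum_zero] at hrows_pos
  rw [← Equiv.pnatEquivNat.symm.hasSum_iff]
  have value_eq : wpC z τ - (rowSum z - π ^ 2 / 3) = wpC z τ + (rowSum z - π ^ 2 / 3) -
      (rowSum z - π ^ 2 / 3 + (rowSum z - π ^ 2 / 3)) := by ring
  rw [value_eq]
  refine hrows_pos.congr_fun fun n => ?_
  have rowSum_sub : rowSum (((n : ℂ) + 1) * τ - z) = rowSum (z - (n + 1) * τ) := by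
    rw [← rowSum_neg, neg_sub]
  simp only [Function.comp, Equiv.pnatEquivNat_symm_apply, Nat.succPNat_coe, Nat.cast_succ,
    neg_mul, rowSum_neg, rowSum_sub, sub_neg_eq_add, add_comm z]
  ring

end LatticeRows

section LambertSeries

/-! ### The `q`-expansion of `℘` at division points -/

/-- The double series `∑_{k,l ≥ 1} l wˡ z^{f(k) l}`. With `f k = m k ± a` these are the series that
occur in the `q`-expansion of `℘` at the `m`-division points. -/
def lambertSeries (w : ℂ) (f : ℕ+ → ℕ) (z : ℂ) : ℂ :=
  ∑' p : ℕ+ × ℕ+, ((p.2 : ℂ) * w ^ (p.2 : ℕ)) * z ^ (f p.1 * p.2)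

variable {w : ℂ} {f : ℕ+ → ℕ}

lemma finite_setOf_mul_eq (hf : ∀ k : ℕ+, (k : ℕ) ≤ f k) (n : ℕ) :
    {p : ℕ+ × ℕ+ | f p.1 * p.2 = n}.Finite := by
  refine ((Set.finite_Iic n.succPNat).prod (Set.finite_Iic n.succPNat)).subset ?_
  rintro ⟨k, l⟩ (hkl : f k * l = n)
  have hfk := hf k
  have hk := k.pos
  have hl := l.pos
  simp only [Set.mem_prod, Set.mem_Iic, ← PNat.coe_le_coe, Nat.succPNat_coe]
  constructor <;> nlinarith

lemma summable_lambertSeries (hw : ‖w‖ = 1) (hf : ∀ k : ℕ+, (k : ℕ) ≤ f k) {z : ℂ} (hz : ‖z‖ < 1) :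
    Summable fun p : ℕ+ × ℕ+ => ((p.2 : ℂ) * w ^ (p.2 : ℕ)) * z ^ (f p.1 * p.2) := by
  have summable_norm := summable_prod_mul_pow (𝕜 := ℝ) 1 (r := ‖z‖) (by simpa using hz)
  refine Summable.of_norm_bounded summable_norm fun p => ?_
  simp only [norm_mul, norm_natCast, norm_pow, hw, one_pow, mul_one, pow_one]
  exact mul_le_mul_of_nonneg_left
    (pow_le_pow_of_le_one (norm_nonneg z) hz.le (Nat.mul_le_mul_right _ (hf p.1)))
    (Nat.cast_nonneg _)

lemma hasFPowerSeriesOnBall_lambertSeries (hw : ‖w‖ = 1) (hf : ∀ k : ℕ+, (k : ℕ) ≤ f k) :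
    HasFPowerSeriesOnBall (lambertSeries w f) (FormalMultilinearSeries.ofScalars ℂ fun n =>
      ∑ p ∈ (finite_setOf_mul_eq hf n).toFinset, (p.2 : ℂ) * w ^ (p.2 : ℕ)) 0 1 :=
  hasFPowerSeriesOnBall_tsum_mul_pow _ fun _ hz => summable_lambertSeries hw hf hz

lemma differentiableOn_lambertSeries (hw : ‖w‖ = 1) (hf : ∀ k : ℕ+, (k : ℕ) ≤ f k) :
    DifferentiableOn ℂ (lambertSeries w f) (Metric.ball 0 1) := by
  simpa [← Metric.eball_ofReal] using (hasFPowerSeriesOnBall_lambertSeries hw hf).differentiableOn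

lemma lambertSeries_mem_taylorSubalgebra {K : Type*} [Field K] [Algebra K ℂ] (hw : ‖w‖ = 1)
    (hwK : w ∈ (algebraMap K ℂ).fieldRange) (hf : ∀ k : ℕ+, (k : ℕ) ≤ f k) :
    lambertSeries w f ∈ taylorSubalgebra K := by
  obtain ⟨w, rfl⟩ := hwK
  refine mem_taylorSubalgebra_of_hasFPowerSeriesAt
    (a := fun n => ∑ p ∈ (finite_setOf_mul_eq hf n).toFinset, (p.2 : K) * w ^ (p.2 : ℕ)) ?_
  simpa using (hasFPowerSeriesOnBall_lambertSeries hw hf).hasFPowerSeriesAt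

lemma lambertSeries_zero (hf : ∀ k : ℕ+, (k : ℕ) ≤ f k) : lambertSeries w f 0 = 0 := by
  refine (tsum_congr fun p => ?_).trans tsum_zero
  have exponent_pos : 0 < f p.1 * p.2 := Nat.mul_pos (p.1.pos.trans_le (hf p.1)) p.2.pos
  rw [zero_pow exponent_pos.ne', mul_zero]

lemma hasDerivAt_lambertSeries (hw : ‖w‖ = 1) (hf : ∀ k : ℕ+, (k : ℕ) ≤ f k) :
    HasDerivAt (lambertSeries w f) (if f 1 = 1 then w else 0) 0 := by
  have hderiv := (hasFPowerSeriesOnBall_lambertSeries hw hf).hasFPowerSeriesAt.hasDerivAt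
  simp only [FormalMultilinearSeries.ofScalars_apply_eq, one_pow, smul_eq_mul, mul_one] at hderiv
  refine hderiv.congr_deriv ?_
  have eq_one_of_mul_eq_one : ∀ p : ℕ+ × ℕ+, f p.1 * p.2 = 1 → p = (1, 1) := fun p hp => by
    obtain ⟨hfp, hp2⟩ := mul_eq_one.1 hp
    have hp1 : (p.1 : ℕ) = 1 := le_antisymm (hfp ▸ hf p.1) p.1.pos
    exact Prod.ext (PNat.coe_eq_one_iff.1 hp1) (PNat.coe_eq_one_iff.1 hp2)
  split_ifs with hf1
  · rw [Finset.sum_eq_single (1, 1)]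
    · simp
    · exact fun p hp hne => absurd (eq_one_of_mul_eq_one p (by simpa using hp)) hne
    · simp [hf1]
  · refine Finset.sum_eq_zero fun p hp => absurd ?_ hf1
    have hp' : f p.1 * p.2 = 1 := by simpa using hp
    simpa [eq_one_of_mul_eq_one p hp'] using hp'

lemma hasSum_lambertSeries (hw : ‖w‖ = 1) (hf : ∀ k : ℕ+, (k : ℕ) ≤ f k) {z : ℂ} (hz : ‖z‖ < 1) :
    HasSum (fun k : ℕ+ => ∑' l : ℕ+, (l : ℂ) * (w * z ^ f k) ^ (l : ℕ)) (lambertSeries w f z) := by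
  have hsum := summable_lambertSeries hw hf hz
  refine (hsum.hasSum.prod_fiberwise fun k => (hsum.prod_factor k).hasSum).congr_fun fun k =>
    tsum_congr fun l => ?_
  rw [mul_pow, ← pow_mul, mul_assoc]

end LambertSeries

section WeierstrassSeries

/-- The `m`-th root of unity `exp(2πi b/m)`. -/
def unitRoot (m : ℕ) (b : ℤ) : ℂ := Complex.exp (2 * π * Complex.I * (b / m))

/-- The contribution of the row of the lattice through the origin to `℘ / (2πi)²` at
`(aτ + b) / m`, as a function of `z = q^{1/m}`. -/
def centralRowSeries (m a : ℕ) (b : ℤ) (z : ℂ) : ℂ :=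
  if a = 0 then rowSum (b / m) / (2 * π * Complex.I) ^ 2
  else unitRoot m b * z ^ a / (1 - unitRoot m b * z ^ a) ^ 2

/-- The value of `℘ / (2πi)²` at the division point `(aτ + b) / m`, as a function of
`z = q^{1/m}`. -/
def weierstrassSeries (m a : ℕ) (b : ℤ) (z : ℂ) : ℂ :=
  1 / 12 + centralRowSeries m a b z + lambertSeries (unitRoot m (-b)) (fun k => m * k - a) z +
    lambertSeries (unitRoot m b) (fun k => m * k + a) z -
      2 * lambertSeries (unitRoot m 0) (fun k => m * k) z

lemma unitRoot_ne_zero (m : ℕ) (b : ℤ) : unitRoot m b ≠ 0 := Complex.exp_ne_zero _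

lemma unitRoot_zero (m : ℕ) : unitRoot m 0 = 1 := by simp [unitRoot]

lemma unitRoot_neg (m : ℕ) (b : ℤ) : unitRoot m (-b) = (unitRoot m b)⁻¹ := by
  rw [unitRoot, unitRoot, ← Complex.exp_neg]
  push_cast
  ring_nf

lemma norm_unitRoot (m : ℕ) (b : ℤ) : ‖unitRoot m b‖ = 1 := by
  have exponent_eq : (2 * π * Complex.I * (b / m) : ℂ) =
      ((2 * π * (b / m) : ℝ) : ℂ) * Complex.I := by
    push_cast
    ring
  rw [unitRoot, exponent_eq]
  exact Complex.norm_exp_ofReal_mul_I _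

lemma unitRoot_eq_one {m : ℕ} (hm : m ≠ 0) {b : ℤ} (h : unitRoot m b = 1) : (b : ZMod m) = 0 := by
  obtain ⟨n, hn⟩ := Complex.exp_eq_one_iff.1 h
  have hm0 : (m : ℂ) ≠ 0 := Nat.cast_ne_zero.2 hm
  have b_eq : (b : ℂ) = m * n := by
    field_simp [Complex.two_pi_I_ne_zero] at hn
    linear_combination hn
  exact (ZMod.intCast_zmod_eq_zero_iff_dvd _ _).2 ⟨n, by exact_mod_cast b_eq⟩

lemma exp_two_pi_I_mul {m : ℕ} (n : ℕ) (b : ℤ) (τ : ℍ) :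
    Complex.exp (2 * π * Complex.I * ((n / m : ℂ) * τ + b / m)) =
      unitRoot m b * qpow m 1 τ ^ n := by
  rw [unitRoot, ← qpow_natCast, qpow, ← Complex.exp_add]
  push_cast
  ring_nf

variable {m a : ℕ}

lemma rowSum_div_eq_tsum_qpow (hm : m ≠ 0) {n : ℕ} (hn : n ≠ 0) (b : ℤ) (τ : ℍ) :
    rowSum ((n / m : ℂ) * τ + b / m) / (2 * π * Complex.I) ^ 2 =
      ∑' l : ℕ+, (l : ℂ) * (unitRoot m b * qpow m 1 τ ^ n) ^ (l : ℕ) := by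
  have arg_eq : (n / m : ℂ) * τ + b / m = ((n / m : ℝ) : ℂ) * τ + ((b / m : ℝ) : ℂ) := by
    push_cast
    rfl
  have im_pos : 0 < ((n / m : ℂ) * τ + b / m).im := by
    rw [arg_eq, Complex.add_im, Complex.im_ofReal_mul, Complex.ofReal_im, add_zero]
    exact mul_pos (by positivity) τ.im_pos
  rw [rowSum_div_eq_tsum _ im_pos, exp_two_pi_I_mul]

lemma rowSum_div_eq_centralRowSeries (hm : m ≠ 0) (b : ℤ) (τ : ℍ) :
    rowSum ((a / m : ℂ) * τ + b / m) / (2 * π * Complex.I) ^ 2 =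
      centralRowSeries m a b (qpow m 1 τ) := by
  rw [centralRowSeries]
  split_ifs with ha
  · simp [ha]
  · have norm_lt_one : ‖unitRoot m b * qpow m 1 τ ^ a‖ < 1 := by
      rw [norm_mul, norm_unitRoot, one_mul, norm_pow]
      exact pow_lt_one₀ (norm_nonneg _) (norm_qpow_one_lt_one (Nat.pos_of_ne_zero hm) τ) ha
    rw [rowSum_div_eq_tsum_qpow hm ha, ← tsum_coe_mul_geometric_of_norm_lt_one norm_lt_one,
      ← tsum_zero_pnat_eq_tsum_nat (hasSum_coe_mul_geometric_of_norm_lt_one norm_lt_one).summable]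
    simp

lemma le_mul_sub (ha : a < m) (k : ℕ+) : (k : ℕ) ≤ m * k - a := by
  have hk := k.pos
  have : (k : ℕ) + a ≤ m * k := by nlinarith
  omega

lemma le_mul_add (hm : m ≠ 0) (a : ℕ) (k : ℕ+) : (k : ℕ) ≤ m * k + a :=
  (Nat.le_mul_of_pos_left _ (Nat.pos_of_ne_zero hm)).trans (Nat.le_add_right _ _)

lemma rowSum_sub_add_rowSum_add_div_eq_tsum_qpow (ha : a < m) (b : ℤ) (τ : ℍ) (k : ℕ+) :
    (rowSum (k * τ - ((a / m : ℂ) * τ + b / m)) + rowSum (k * τ + ((a / m : ℂ) * τ + b / m)) -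
        2 * rowSum (k * τ)) / (2 * π * Complex.I) ^ 2 =
      ∑' l : ℕ+, (l : ℂ) * (unitRoot m (-b) * qpow m 1 τ ^ (m * k - a : ℕ)) ^ (l : ℕ) +
        ∑' l : ℕ+, (l : ℂ) * (unitRoot m b * qpow m 1 τ ^ (m * k + a : ℕ)) ^ (l : ℕ) -
          2 * ∑' l : ℕ+, (l : ℂ) * (unitRoot m 0 * qpow m 1 τ ^ (m * k + 0 : ℕ)) ^ (l : ℕ) := by
  have hm : m ≠ 0 := by omega
  have hmC : (m : ℂ) ≠ 0 := Nat.cast_ne_zero.2 hm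
  have row_sub : (k * τ - ((a / m : ℂ) * τ + b / m) : ℂ) =
      (((m * k - a : ℕ) : ℂ) / m) * τ + ((-b : ℤ) : ℂ) / m := by
    rw [Nat.cast_sub (by nlinarith [k.pos])]
    push_cast
    field_simp
    ring
  have row_add : (k * τ + ((a / m : ℂ) * τ + b / m) : ℂ) =
      (((m * k + a : ℕ) : ℂ) / m) * τ + (b : ℂ) / m := by
    push_cast
    field_simp
    ring
  have row_zero : (k * τ : ℂ) = (((m * k + 0 : ℕ) : ℂ) / m) * τ + ((0 : ℤ) : ℂ) / m := by
    push_cast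
    field_simp
    ring
  rw [row_sub, row_add, row_zero, sub_div, add_div, mul_div_assoc,
    rowSum_div_eq_tsum_qpow hm (k.pos.trans_le (le_mul_sub ha k)).ne',
    rowSum_div_eq_tsum_qpow hm (k.pos.trans_le (le_mul_add hm a k)).ne',
    rowSum_div_eq_tsum_qpow hm (k.pos.trans_le (le_mul_add hm 0 k)).ne']

theorem wpC_div_eq_weierstrassSeries (ha : a < m) (b : ℤ) (τ : ℍ) :
    wpC ((a / m : ℂ) * τ + b / m) τ / (2 * π * Complex.I) ^ 2 =
      weierstrassSeries m a b (qpow m 1 τ) := by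
  have hm : m ≠ 0 := by omega
  have hq : ‖qpow m 1 τ‖ < 1 := norm_qpow_one_lt_one (by omega) τ
  have hseries := ((hasSum_lambertSeries (norm_unitRoot m (-b)) (le_mul_sub ha) hq).add
    (hasSum_lambertSeries (norm_unitRoot m b) (le_mul_add hm a) hq)).sub
      ((hasSum_lambertSeries (norm_unitRoot m 0) (le_mul_add hm 0) hq).mul_left 2)
  have hrows := (hasSum_rowSum ((a / m : ℂ) * τ + b / m) τ).div_const ((2 * π * Complex.I) ^ 2)
  have sum_eq := hrows.unique <|
    hseries.congr_fun (rowSum_sub_add_rowSum_add_div_eq_tsum_qpow ha b τ)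
  have pi_sq_div : (π ^ 2 / 3 : ℂ) / (2 * π * Complex.I) ^ 2 = -(1 / 12) := by
    rw [mul_pow, Complex.I_sq]
    field_simp
    norm_num
  rw [sub_div, sub_div, rowSum_div_eq_centralRowSeries hm, pi_sq_div] at sum_eq
  rw [weierstrassSeries]
  simp only [add_zero] at sum_eq
  linear_combination sum_eq

end WeierstrassSeries

section WeierstrassSeriesExpansion

variable {m a : ℕ}

lemma differentiableOn_centralRowSeries (m a : ℕ) (b : ℤ) :
    DifferentiableOn ℂ (centralRowSeries m a b) (Metric.ball 0 1) := by
  unfold centralRowSeries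
  split_ifs with ha
  · exact differentiableOn_const _
  · refine DifferentiableOn.div (by fun_prop) (by fun_prop) fun z hz => ?_
    have norm_lt_one : ‖unitRoot m b * z ^ a‖ < 1 := by
      rw [norm_mul, norm_unitRoot, one_mul, norm_pow]
      exact pow_lt_one₀ (norm_nonneg z) (by simpa using hz) ha
    refine pow_ne_zero _ fun h => norm_lt_one.ne ?_
    rw [← sub_eq_zero.1 h, norm_one]

lemma differentiableOn_weierstrassSeries (ha : a < m) (b : ℤ) :
    DifferentiableOn ℂ (weierstrassSeries m a b) (Metric.ball 0 1) := by
  have hm : m ≠ 0 := by omega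
  exact ((((differentiableOn_const _).add (differentiableOn_centralRowSeries m a b)).add
    (differentiableOn_lambertSeries (norm_unitRoot m (-b)) (le_mul_sub ha))).add
    (differentiableOn_lambertSeries (norm_unitRoot m b) (le_mul_add hm a))).sub
    ((differentiableOn_const 2).mul
      (differentiableOn_lambertSeries (norm_unitRoot m 0) (le_mul_add hm 0)))

lemma centralRowSeries_mem_taylorSubalgebra {K : Type*} [Field K] [Algebra K ℂ] {b : ℤ}
    (hK : unitRoot m b ∈ (algebraMap K ℂ).fieldRange)
    (h0 : a = 0 → rowSum (b / m) / (2 * π * Complex.I) ^ 2 ∈ (algebraMap K ℂ).fieldRange) :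
    centralRowSeries m a b ∈ taylorSubalgebra K := by
  unfold centralRowSeries
  split_ifs with ha
  · obtain ⟨c, hc⟩ := h0 ha
    exact hc ▸ (taylorSubalgebra K).algebraMap_mem c
  · obtain ⟨w, hw⟩ := hK
    have monomial_mem : (fun z : ℂ => unitRoot m b * z ^ a) ∈ taylorSubalgebra K :=
      hw ▸ mul_mem ((taylorSubalgebra K).algebraMap_mem w) (pow_mem id_mem_taylorSubalgebra a)
    have quotient_mem := mul_mem monomial_mem (inv_mem_taylorSubalgebra
      (pow_mem (sub_mem (one_mem _) monomial_mem) 2) (by simp [ha]))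
    rwa [← div_eq_mul_inv] at quotient_mem

lemma weierstrassSeries_mem_taylorSubalgebra {K : Type*} [Field K] [Algebra K ℂ] (ha : a < m)
    {b : ℤ} (hK : unitRoot m b ∈ (algebraMap K ℂ).fieldRange)
    (h0 : a = 0 → rowSum (b / m) / (2 * π * Complex.I) ^ 2 ∈ (algebraMap K ℂ).fieldRange) :
    weierstrassSeries m a b ∈ taylorSubalgebra K := by
  have hm : m ≠ 0 := by omega
  have unitRoot_neg_mem : unitRoot m (-b) ∈ (algebraMap K ℂ).fieldRange :=
    unitRoot_neg m b ▸ inv_mem hK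
  have unitRoot_zero_mem : unitRoot m 0 ∈ (algebraMap K ℂ).fieldRange :=
    unitRoot_zero m ▸ one_mem _
  have const_mem : (fun _ => 1 / 12 : ℂ → ℂ) ∈ taylorSubalgebra K := by
    convert (taylorSubalgebra K).algebraMap_mem (1 / 12) using 1
    ext z
    rw [Pi.algebraMap_apply, map_div₀, map_one, map_ofNat]
  exact sub_mem (add_mem (add_mem (add_mem const_mem
    (centralRowSeries_mem_taylorSubalgebra hK h0))
    (lambertSeries_mem_taylorSubalgebra (norm_unitRoot m (-b)) unitRoot_neg_mem (le_mul_sub ha)))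
    (lambertSeries_mem_taylorSubalgebra (norm_unitRoot m b) hK (le_mul_add hm a)))
    (mul_mem (ofNat_mem _ 2)
      (lambertSeries_mem_taylorSubalgebra (norm_unitRoot m 0) unitRoot_zero_mem (le_mul_add hm 0)))

lemma weierstrassSeries_zero (ha : a < m) (b : ℤ) : weierstrassSeries m a b 0 =
    1 / 12 + if a = 0 then rowSum (b / m) / (2 * π * Complex.I) ^ 2 else 0 := by
  have hm : m ≠ 0 := by omega
  have hzero : lambertSeries (unitRoot m 0) (fun k => m * k) 0 = 0 :=
    lambertSeries_zero (le_mul_add hm 0)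
  rw [weierstrassSeries, lambertSeries_zero (le_mul_sub ha), lambertSeries_zero (le_mul_add hm a),
    hzero, centralRowSeries]
  split_ifs with h
  · ring
  · simp [h]

lemma hasDerivAt_centralRowSeries (ha : a ≠ 0) (b : ℤ) :
    HasDerivAt (centralRowSeries m a b) (if a = 1 then unitRoot m b else 0) 0 := by
  have monomial_deriv : HasDerivAt (fun z : ℂ => unitRoot m b * z ^ a)
      (if a = 1 then unitRoot m b else 0) 0 := by
    refine ((hasDerivAt_pow a (0 : ℂ)).const_mul (unitRoot m b)).congr_deriv ?_
    split_ifs with h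
    · simp [h]
    · simp [zero_pow (show a - 1 ≠ 0 by omega)]
  have hderiv := monomial_deriv.div ((monomial_deriv.const_sub 1).pow 2) (by simp [ha])
  refine (hderiv.congr_deriv (by simp [ha])).congr_of_eventuallyEq <|
    Eventually.of_forall fun z => ?_
  simp [centralRowSeries, ha]

lemma hasDerivAt_weierstrassSeries (hm : 1 < m) (ha : a < m) (b : ℤ) (ha0 : a ≠ 0) :
    HasDerivAt (weierstrassSeries m a b) ((if a = 1 then unitRoot m b else 0) +
      if a + 1 = m then (unitRoot m b)⁻¹ else 0) 0 := by
  have hsub := hasDerivAt_lambertSeries (norm_unitRoot m (-b)) (le_mul_sub ha)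
  have hadd := hasDerivAt_lambertSeries (norm_unitRoot m b) (le_mul_add (m := m) (by omega) a)
  have hzero := hasDerivAt_lambertSeries (norm_unitRoot m 0) (le_mul_add (m := m) (by omega) 0)
  refine (((((hasDerivAt_const (0 : ℂ) (1 / 12 : ℂ)).add
    (hasDerivAt_centralRowSeries (m := m) ha0 b)).add hsub).add hadd).sub
    (hzero.const_mul 2)).congr_deriv ?_
  have hsub_iff : m * ((1 : ℕ+) : ℕ) - a = 1 ↔ a + 1 = m := by
    rw [PNat.one_coe]
    omega
  have hadd_ne : m * ((1 : ℕ+) : ℕ) + a ≠ 1 := by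
    rw [PNat.one_coe]
    omega
  have hzero_ne : m * ((1 : ℕ+) : ℕ) ≠ 1 := by
    rw [PNat.one_coe]
    omega
  simp only [hsub_iff, hadd_ne, hzero_ne, if_false, unitRoot_neg, zero_add, add_zero, mul_zero,
    sub_zero]

/-- The value at `0` detects `a = 0`; otherwise the derivative at `0` detects `±(a, b)`. -/
lemma eq_of_weierstrassSeries_eventuallyEq (hm : 1 < m) (ha : a < m) {b : ℤ}
    (h : weierstrassSeries m a b =ᶠ[𝓝 0] weierstrassSeries m 1 0) :
    (b : ZMod m) = 0 ∧ (a = 1 ∨ a + 1 = m) := by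
  have hm0 : m ≠ 0 := by omega
  have ha0 : a ≠ 0 := by
    rintro rfl
    have hval := h.eq_of_nhds
    rw [weierstrassSeries_zero ha, weierstrassSeries_zero hm] at hval
    have rowSum_ne_zero : rowSum (b / m) ≠ 0 := by exact_mod_cast rowSum_ofReal_ne_zero (b / m)
    simp [rowSum_ne_zero] at hval
  have hderiv := ((hasDerivAt_weierstrassSeries hm ha b ha0).congr_of_eventuallyEq h.symm).unique
    (hasDerivAt_weierstrassSeries hm hm 0 one_ne_zero)
  rw [unitRoot_zero, inv_one, if_pos rfl] at hderiv
  have hroot := unitRoot_ne_zero m b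
  suffices unitRoot m b = 1 ∧ (a = 1 ∨ a + 1 = m) from ⟨unitRoot_eq_one hm0 this.1, this.2⟩
  by_cases ha1 : a = 1
  · refine ⟨?_, Or.inl ha1⟩
    rw [if_pos ha1, ha1] at hderiv
    split_ifs at hderiv
    · field_simp at hderiv
      have sq_eq_zero : (unitRoot m b - 1) ^ 2 = 0 := by linear_combination hderiv
      exact sub_eq_zero.1 (pow_eq_zero_iff two_ne_zero |>.1 sq_eq_zero)
    · simpa using hderiv
  · rw [if_neg ha1, zero_add] at hderiv
    by_cases ham : a + 1 = m
    · rw [if_pos ham, if_neg (by omega), add_zero] at hderiv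
      exact ⟨inv_eq_one.1 hderiv, Or.inr ham⟩
    · rw [if_neg ham] at hderiv
      split_ifs at hderiv <;> norm_num at hderiv

end WeierstrassSeriesExpansion

section FrickeFunctions

/-! ### Fricke functions at division points -/

variable {m : ℕ}

lemma fricke_div_eq {a : ℕ} (ha : a < m) (b : ℤ) : fricke ((a : ℚ) / m, (b : ℚ) / m) =
    12 * frickeFactor * fun τ => weierstrassSeries m a b (qpow m 1 τ) := by
  ext τ
  simp only [Pi.mul_apply]
  rw [fricke_eq, ← wpC_div_eq_weierstrassSeries ha]
  push_cast
  rfl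

lemma fricke_div_congr (hm : m ≠ 0) {a a' b b' : ℤ} (ha : (a : ZMod m) = a')
    (hb : (b : ZMod m) = b') :
    fricke ((a : ℚ) / m, (b : ℚ) / m) = fricke ((a' : ℚ) / m, (b' : ℚ) / m) := by
  have div_eq_add : ∀ {c c' : ℤ}, (c : ZMod m) = c' → ∃ x : ℤ, (c : ℚ) / m = c' / m + x := by
    intro c c' h
    obtain ⟨x, hx⟩ := (ZMod.intCast_eq_intCast_iff_dvd_sub _ _ _).1 h.symm
    have hmQ : (m : ℚ) ≠ 0 := Nat.cast_ne_zero.2 hm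
    refine ⟨x, ?_⟩
    rw [eq_add_of_sub_eq' hx]
    push_cast
    field_simp
  obtain ⟨x, hx⟩ := div_eq_add ha
  obtain ⟨y, hy⟩ := div_eq_add hb
  rw [hx, hy]
  exact fricke_add_int (a' / m, b' / m) x y

lemma exists_lt_fricke_div_eq (hm : m ≠ 0) (a b : ℤ) : ∃ a' < m, (a : ZMod m) = (a' : ℕ) ∧
    fricke ((a : ℚ) / m, (b : ℚ) / m) = fricke ((a' : ℚ) / m, (b : ℚ) / m) := by
  have : NeZero m := ⟨hm⟩
  have val_eq : (a : ZMod m) = ((a : ZMod m).val : ℕ) := (ZMod.natCast_zmod_val _).symm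
  refine ⟨(a : ZMod m).val, ZMod.val_lt _, val_eq, ?_⟩
  simpa only [Int.cast_natCast] using
    fricke_div_congr hm (a' := (a : ZMod m).val) (by rwa [Int.cast_natCast]) (Eq.refl (b : ZMod m))

lemma fricke_div_mem_holomorphicSubalgebra (hm : m ≠ 0) (a b : ℤ) :
    fricke ((a : ℚ) / m, (b : ℚ) / m) ∈ holomorphicSubalgebra := by
  obtain ⟨a', ha, -, fricke_eq'⟩ := exists_lt_fricke_div_eq hm a b
  rw [fricke_eq', fricke_div_eq ha]
  refine mul_mem (mul_mem (ofNat_mem _ 12) frickeFactor_mem_holomorphicSubalgebra) ?_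
  refine UpperHalfPlane.mdifferentiable_iff.2 <| DifferentiableOn.congr
    (f := fun z : ℂ => weierstrassSeries m a' b
      (Complex.exp (2 * π * Complex.I * (((1 : ℤ) : ℂ) / m) * z))) ?_ fun z hz => ?_
  · refine (differentiableOn_weierstrassSeries ha b).comp (by fun_prop) fun z hz => ?_
    simpa [qpow] using norm_qpow_one_lt_one (Nat.pos_of_ne_zero hm) ⟨z, hz⟩
  · simp [qpow, UpperHalfPlane.ofComplex_apply_of_im_pos hz]

lemma fricke_div_mem_laurentSubalgebra (hm : m ≠ 0) (a b : ℤ) :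
    fricke ((a : ℚ) / m, (b : ℚ) / m) ∈ laurentSubalgebra ℂ m := by
  obtain ⟨a', ha, -, fricke_eq'⟩ := exists_lt_fricke_div_eq hm a b
  rw [fricke_eq', fricke_div_eq ha]
  exact mul_mem (mul_mem (ofNat_mem _ 12) (mem_laurentSubalgebra_of_one (Nat.pos_of_ne_zero hm)
    (mem_laurentSubalgebra_complex frickeFactor_mem_laurentSubalgebra)))
    (comp_qpow_mem_laurentSubalgebra
      (weierstrassSeries_mem_taylorSubalgebra ha ⟨_, rfl⟩ fun _ => ⟨_, rfl⟩))

lemma fricke_one_div_mem_laurentSubalgebra_rat (hm : 1 < m) :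
    fricke ((1 : ℚ) / m, 0) ∈ laurentSubalgebra ℚ m := by
  have hfricke := fricke_div_eq hm 0
  rw [Nat.cast_one, Int.cast_zero, zero_div] at hfricke
  rw [hfricke]
  exact mul_mem (mul_mem (ofNat_mem _ 12) (mem_laurentSubalgebra_of_one (by omega)
    frickeFactor_mem_laurentSubalgebra)) (comp_qpow_mem_laurentSubalgebra
      (weierstrassSeries_mem_taylorSubalgebra hm (unitRoot_zero m ▸ one_mem _)
        fun h => absurd h one_ne_zero))

lemma fricke_one_div_smul (m : ℕ) (γ : SL(2, ℤ)) (τ : ℍ) : fricke ((1 : ℚ) / m, 0) (γ • τ) =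
    fricke (((γ 0 0 : ℤ) : ℚ) / m, ((γ 0 1 : ℤ) : ℚ) / m) τ := by
  rw [fricke_smul, tAct]
  simp [div_eq_mul_inv]

lemma fricke_one_div_smul_of_gammaUpper (hm : m ≠ 0) {γ : SL(2, ℤ)} (hγ : GammaUpper m γ) (τ : ℍ) :
    fricke ((1 : ℚ) / m, 0) (γ • τ) = fricke ((1 : ℚ) / m, 0) τ := by
  rw [fricke_one_div_smul, fricke_div_congr hm (a' := 1) (b' := 0) (by simp [hγ.1])
    (by simp [hγ.2.2])]
  simp

lemma eq_of_fricke_div_eventuallyEq (hm : 1 < m) {a b : ℤ}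
    (h : fricke ((a : ℚ) / m, (b : ℚ) / m) =ᶠ[atImInfty] fricke ((1 : ℚ) / m, 0)) :
    (b : ZMod m) = 0 ∧ ((a : ZMod m) = 1 ∨ (a : ZMod m) = -1) := by
  obtain ⟨a', ha, ha_eq, fricke_eq'⟩ := exists_lt_fricke_div_eq (Nat.ne_zero_of_lt hm) a b
  have hfricke := fricke_div_eq hm 0
  rw [Nat.cast_one, Int.cast_zero, zero_div] at hfricke
  rw [fricke_eq', fricke_div_eq ha, hfricke] at h
  have factor_ne_zero : ∀ᶠ τ in atImInfty, frickeFactor τ ≠ 0 := by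
    filter_upwards [tendsto_frickeFactor_mul_qpow.eventually_ne one_ne_zero] with τ hτ h0
    exact hτ (by simp [h0])
  have series_eq : ∃ᶠ τ in atImInfty,
      weierstrassSeries m a' b (qpow m 1 τ) = weierstrassSeries m 1 0 (qpow m 1 τ) := by
    refine (h.and factor_ne_zero).frequently.mono fun τ hτ => ?_
    exact mul_left_cancel₀ (mul_ne_zero (by norm_num) hτ.2) hτ.1
  have analyticAt {c : ℕ} (hc : c < m) (d : ℤ) : AnalyticAt ℂ (weierstrassSeries m c d) 0 :=
    (differentiableOn_weierstrassSeries hc d).analyticAt (Metric.ball_mem_nhds 0 one_pos)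
  obtain ⟨hb, ha'⟩ := eq_of_weierstrassSeries_eventuallyEq hm ha <|
    ((analyticAt ha b).frequently_eq_iff_eventually_eq (analyticAt hm 0)).1
      ((tendsto_qpow_one_atImInfty (by omega)).frequently series_eq)
  refine ⟨hb, ha'.imp (fun h1 => ?_) fun h1 => ?_⟩
  · simp [ha_eq, h1]
  · refine ha_eq.trans (eq_neg_of_add_eq_zero_left ?_)
    rw [← Nat.cast_add_one, h1, ZMod.natCast_self]

lemma gammaUpper_of_row_eq {γ : SL(2, ℤ)} (h0 : ((γ 0 0 : ℤ) : ZMod m) = 1)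
    (h1 : ((γ 0 1 : ℤ) : ZMod m) = 0) : GammaUpper m γ := by
  have hdet := congrArg (Int.cast : ℤ → ZMod m) ((Matrix.det_fin_two γ.1).symm.trans γ.det_coe)
  push_cast at hdet
  refine ⟨h0, ?_, h1⟩
  rw [h0, h1] at hdet
  simpa using hdet

lemma gammaUpper_or_neg_of_fricke_smul_eventuallyEq (hm : 1 < m) {γ : SL(2, ℤ)}
    (h : (fun τ => fricke ((1 : ℚ) / m, 0) (γ • τ)) =ᶠ[atImInfty] fricke ((1 : ℚ) / m, 0)) :
    GammaUpper m γ ∨ GammaUpper m (-γ) := by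
  rw [funext (fricke_one_div_smul m γ)] at h
  obtain ⟨h01, h00⟩ := eq_of_fricke_div_eventuallyEq hm h
  refine h00.imp (gammaUpper_of_row_eq · h01) fun h00 => gammaUpper_of_row_eq ?_ ?_
  · simp [h00]
  · simp [h01]

end FrickeFunctions

section LevelOne

/-! ### Level one: holomorphic modular functions are polynomials in `j` -/

variable {F : ℍ → ℂ}

lemma periodic_comp_ofComplex (hF : ∀ τ : ℍ, F ((1 : ℝ) +ᵥ τ) = F τ) :
    Function.Periodic (F ∘ ofComplex) (1 : ℝ) := by
  intro w
  rcases lt_or_ge 0 w.im with hw | hw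
  · have im_add : 0 < (w + (1 : ℝ)).im := by simpa using hw
    simp only [Function.comp, ofComplex_apply_of_im_pos im_add, ofComplex_apply_of_im_pos hw]
    rw [← hF ⟨w, hw⟩]
    congr 1
    ext
    simp [add_comm]
  · have im_add : (w + (1 : ℝ)).im ≤ 0 := by simpa using hw
    simp only [Function.comp, ofComplex_apply_of_im_nonpos im_add, ofComplex_apply_of_im_nonpos hw]

lemma exists_sub_const_isBigO_qpow_one (hF : F ∈ holomorphicSubalgebra)
    (hper : ∀ τ : ℍ, F ((1 : ℝ) +ᵥ τ) = F τ) (hb : F =O[atImInfty] (1 : ℍ → ℝ)) :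
    ∃ c : ℂ, (fun τ => F τ - c) =O[atImInfty] qpow 1 1 := by
  have hperC := periodic_comp_ofComplex hper
  refine ⟨cuspFunction 1 F 0, ?_⟩
  have isBigO_sub := (analyticAt_cuspFunction_zero one_pos hperC hF hb).differentiableAt.isBigO_sub
  refine (isBigO_sub.comp_tendsto (tendsto_qpow_one_nhds_zero one_pos)).congr (fun τ => ?_)
    fun τ => sub_zero _
  simp only [Function.comp_apply, qpow_one_eq_qParam, Nat.cast_one,
    eq_cuspFunction τ one_ne_zero hperC]

lemma qpow_one_vadd (n : ℤ) (τ : ℍ) : qpow 1 n ((1 : ℝ) +ᵥ τ) = qpow 1 n τ := by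
  simp only [qpow, coe_vadd, Nat.cast_one, div_one, ofReal_one]
  rw [mul_add, Complex.exp_add, mul_one, mul_comm (2 * (π : ℂ) * Complex.I) (n : ℂ),
    Complex.exp_int_mul_two_pi_mul_I, one_mul]

lemma qpow_mem_holomorphicSubalgebra (m : ℕ) (n : ℤ) : qpow m n ∈ holomorphicSubalgebra := by
  refine UpperHalfPlane.mdifferentiable_iff.2 <| DifferentiableOn.congr
    (f := fun z : ℂ => Complex.exp (2 * π * Complex.I * ((n : ℂ) / m) * z)) (by fun_prop)
    fun z hz => ?_
  simp [qpow, UpperHalfPlane.ofComplex_apply_of_im_pos hz]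

open scoped ModularForm in
lemma exists_eq_const_of_isBigO_one (hF : F ∈ holomorphicSubalgebra)
    (hinv : ∀ (γ : SL(2, ℤ)) (τ : ℍ), F (γ • τ) = F τ) (hb : F =O[atImInfty] (1 : ℍ → ℝ)) :
    ∃ c : ℂ, F = fun _ => c := by
  have slash_eq (γ : SL(2, ℤ)) : F ∣[(0 : ℤ)] γ = F := by
    ext τ
    rw [ModularForm.SL_slash_apply, hinv γ τ]
    simp
  let f : ModularForm 𝒮ℒ 0 :=
    { toFun := F
      slash_action_eq' := by
        rintro _ ⟨γ, rfl⟩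
        exact slash_eq γ
      holo' := hF
      bdd_at_cusps' := by
        intro c hc
        rw [OnePoint.isBoundedAt_iff_forall_SL2Z hc]
        intro γ _
        rw [slash_eq]
        exact hb }
  exact ModularFormClass.levelOne_weight_zero_const f

lemma exists_sub_jinv_pow_isBigO (hF : F ∈ holomorphicSubalgebra)
    (hinv : ∀ (γ : SL(2, ℤ)) (τ : ℍ), F (γ • τ) = F τ) {k : ℕ}
    (hb : F =O[atImInfty] qpow 1 (-(k + 1 : ℕ))) :
    ∃ c : ℂ, (fun τ => F τ - c * jinv τ ^ (k + 1)) =O[atImInfty] qpow 1 (-k) := by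
  have exists_isBigO {G : ℍ → ℂ} (hG : G ∈ holomorphicSubalgebra)
      (hGinv : ∀ (γ : SL(2, ℤ)) (τ : ℍ), G (γ • τ) = G τ)
      (hGb : (G * qpow 1 (k + 1)) =O[atImInfty] (1 : ℍ → ℝ)) :
      ∃ c : ℂ, (fun τ => G τ * qpow 1 (k + 1) τ - c) =O[atImInfty] qpow 1 1 := by
    refine exists_sub_const_isBigO_qpow_one
      (mul_mem hG (qpow_mem_holomorphicSubalgebra 1 (k + 1))) (fun τ => ?_) hGb
    rw [qpow_one_vadd, ← modular_T_smul, hGinv]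
  have qpow_mul_qpow (τ : ℍ) : qpow 1 (-(k + 1 : ℕ)) τ * qpow 1 (k + 1) τ = 1 := by
    rw [← qpow_add]
    simpa using qpow_zero 1 τ
  obtain ⟨c, hc⟩ := exists_isBigO hF hinv <| by
    refine (hb.mul (Asymptotics.isBigO_refl (qpow 1 (k + 1)) atImInfty)).trans ?_
    simp only [qpow_mul_qpow]
    exact Asymptotics.isBigO_of_le _ (by simp)
  have tendsto_jinv_pow : Tendsto (jinv ^ (k + 1) * qpow 1 (k + 1)) atImInfty (𝓝 1) := by
    refine (one_pow (M := ℂ) (k + 1) ▸ tendsto_jinv_mul_qpow.pow (k + 1)).congr fun τ => ?_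
    simp only [Pi.mul_apply, Pi.pow_apply, mul_pow]
    rw [← qpow_natCast, Nat.cast_add_one]
  obtain ⟨d, hd⟩ := exists_isBigO (pow_mem jinv_mem_holomorphicSubalgebra (k + 1))
    (fun γ τ => by simp only [Pi.pow_apply, jinv_smul]) (tendsto_jinv_pow.isBigO_one ℝ)
  have d_eq : d = 1 := by
    have tendsto_zero := hd.trans_tendsto (tendsto_qpow_one_nhds_zero one_pos)
    exact (sub_eq_zero.1 (tendsto_nhds_unique (tendsto_jinv_pow.sub_const d) tendsto_zero)).symm
  subst d_eq
  refine ⟨c, ((hc.sub (hd.const_mul_left c)).mul (Asymptotics.isBigO_refl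
    (qpow 1 (-(k + 1 : ℕ))) atImInfty)).congr (fun τ => ?_) fun τ => ?_⟩
  · simp only [Pi.pow_apply]
    linear_combination (F τ - c * jinv τ ^ (k + 1)) * qpow_mul_qpow τ
  · rw [← qpow_add]
    congr 1
    push_cast
    ring

lemma mem_adjoin_jinv_of_isBigO (hF : F ∈ holomorphicSubalgebra)
    (hinv : ∀ (γ : SL(2, ℤ)) (τ : ℍ), F (γ • τ) = F τ) {k : ℕ}
    (hb : F =O[atImInfty] qpow 1 (-k)) : F ∈ Algebra.adjoin ℂ {jinv} := by
  induction k generalizing F with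
  | zero =>
    obtain ⟨c, rfl⟩ := exists_eq_const_of_isBigO_one hF hinv
      (hb.trans (Asymptotics.isBigO_of_le _ fun τ => by simp [qpow_zero]))
    exact (Algebra.adjoin ℂ {jinv}).algebraMap_mem c
  | succ k ih =>
    obtain ⟨c, hc⟩ := exists_sub_jinv_pow_isBigO hF hinv hb
    have sub_mem_adjoin : F - c • jinv ^ (k + 1) ∈ Algebra.adjoin ℂ {jinv} :=
      ih (sub_mem hF (Subalgebra.smul_mem _ (pow_mem jinv_mem_holomorphicSubalgebra _) c))
        (fun γ τ => by simp only [Pi.sub_apply, Pi.smul_apply, Pi.pow_apply, hinv, jinv_smul]) hc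
    rw [← sub_add_cancel F (c • jinv ^ (k + 1))]
    exact add_mem sub_mem_adjoin
      (Subalgebra.smul_mem _ (pow_mem (Algebra.self_mem_adjoin_singleton ℂ jinv) _) c)

end LevelOne

section MeromorphicFunctions

/-! ### Meromorphic functions on the upper half-plane -/

variable {F G : ℍ → ℂ} {τ : ℍ}

lemma extH_coe (F : ℍ → ℂ) (τ : ℍ) : extH F τ = F τ := dif_pos τ.im_pos

lemma extH_add (F G : ℍ → ℂ) : extH (F + G) = extH F + extH G := by
  ext z
  by_cases hz : 0 < z.im <;> simp [extH, hz]

lemma extH_mul (F G : ℍ → ℂ) : extH (F * G) = extH F * extH G := by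
  ext z
  by_cases hz : 0 < z.im <;> simp [extH, hz]

lemma extH_inv (F : ℍ → ℂ) : extH F⁻¹ = (extH F)⁻¹ := by
  ext z
  by_cases hz : 0 < z.im <;> simp [extH, hz]

lemma analyticAt_extH (hF : F ∈ holomorphicSubalgebra) (τ : ℍ) : AnalyticAt ℂ (extH F) τ := by
  refine DifferentiableOn.analyticAt (s := {z | 0 < z.im})
    ((UpperHalfPlane.mdifferentiable_iff.1 hF).congr fun z hz => ?_)
    (isOpen_upperHalfPlaneSet.mem_nhds τ.im_pos)
  rw [Function.comp_apply, ofComplex_apply_of_im_pos hz]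
  exact extH_coe F ⟨z, hz⟩

/-- The algebra of meromorphic functions on the upper half-plane. -/
def meromorphicSubalgebra : Subalgebra ℂ (ℍ → ℂ) where
  carrier := {F | MeromorphicOn (extH F) {z | 0 < z.im}}
  mul_mem' {F G} hF hG := by
    rw [Set.mem_ofPred_eq, extH_mul]
    exact MeromorphicOn.mul hF hG
  add_mem' {F G} hF hG := by
    rw [Set.mem_ofPred_eq, extH_add]
    exact MeromorphicOn.add hF hG
  algebraMap_mem' c z hz :=
    (analyticAt_extH (holomorphicSubalgebra.algebraMap_mem c) ⟨z, hz⟩).meromorphicAt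

lemma holomorphicSubalgebra_le_meromorphicSubalgebra :
    holomorphicSubalgebra ≤ meromorphicSubalgebra :=
  fun _ hF z hz => (analyticAt_extH hF ⟨z, hz⟩).meromorphicAt

lemma div_mem_meromorphicSubalgebra (hF : F ∈ meromorphicSubalgebra)
    (hG : G ∈ meromorphicSubalgebra) : F / G ∈ meromorphicSubalgebra := by
  rw [div_eq_mul_inv]
  refine mul_mem hF ?_
  change MeromorphicOn (extH G⁻¹) _
  rw [extH_inv]
  exact MeromorphicOn.inv hG

lemma comp_smul_mem_meromorphicSubalgebra (hF : F ∈ meromorphicSubalgebra) (γ : SL(2, ℤ)) :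
    (fun τ => F (γ • τ)) ∈ meromorphicSubalgebra := by
  have smul_mem : (fun τ : ℍ => ((γ • τ : ℍ) : ℂ)) ∈ holomorphicSubalgebra :=
    mdifferentiable_coe.comp (mdifferentiable_smul (g := (γ : GL (Fin 2) ℝ)) (by simp))
  intro z hz
  have hcomp : MeromorphicAt (extH F) (extH (fun τ : ℍ => ((γ • τ : ℍ) : ℂ)) z) :=
    extH_coe (fun τ : ℍ => ((γ • τ : ℍ) : ℂ)) ⟨z, hz⟩ ▸ hF _ (γ • (⟨z, hz⟩ : ℍ)).im_pos
  refine (hcomp.comp_analyticAt (analyticAt_extH smul_mem ⟨z, hz⟩)).congr ?_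
  refine mem_nhdsWithin_of_mem_nhds ?_
  filter_upwards [isOpen_upperHalfPlaneSet.mem_nhds hz] with w hw
  have extH_smul := extH_coe (fun τ : ℍ => ((γ • τ : ℍ) : ℂ)) ⟨w, hw⟩
  have extH_comp_smul := extH_coe (fun τ => F (γ • τ)) ⟨w, hw⟩
  rw [Function.comp_apply, extH_smul, extH_coe, extH_comp_smul]

lemma map_coe_nhdsNE (τ : ℍ) : map ((↑) : ℍ → ℂ) (𝓝[≠] τ) = 𝓝[≠] (τ : ℂ) := by
  rw [← isOpenEmbedding_coe.map_nhdsWithin_preimage_eq]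
  congr 2
  ext σ
  simp

lemma extH_comp_coe (F : ℍ → ℂ) : extH F ∘ (↑) = F := funext (extH_coe F)

lemma tendsto_extH_nhdsNE {l : Filter ℂ} :
    Tendsto (extH F) (𝓝[≠] (τ : ℂ)) l ↔ Tendsto F (𝓝[≠] τ) l := by
  rw [← map_coe_nhdsNE, tendsto_map'_iff, extH_comp_coe]

lemma continuousAt_of_continuousAt_extH (hF : ContinuousAt (extH F) τ) : ContinuousAt F τ :=
  extH_comp_coe F ▸ ContinuousAt.comp hF UpperHalfPlane.continuous_coe.continuousAt

lemma eventually_continuousAt_of_mem_meromorphicSubalgebra (hF : F ∈ meromorphicSubalgebra)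
    (τ : ℍ) : ∀ᶠ σ in 𝓝[≠] τ, ContinuousAt F σ := by
  have eventually_analyticAt := (hF τ τ.im_pos).eventually_analyticAt
  rw [← map_coe_nhdsNE, eventually_map] at eventually_analyticAt
  exact eventually_analyticAt.mono fun σ hσ => continuousAt_of_continuousAt_extH hσ.continuousAt

lemma tendsto_smul_nhdsNE (γ : SL(2, ℤ)) (τ : ℍ) :
    Tendsto (fun σ : ℍ => γ • σ) (𝓝[≠] τ) (𝓝[≠] (γ • τ)) :=
  ((Homeomorph.smul (γ : GL (Fin 2) ℝ) : ℍ ≃ₜ ℍ).map_punctured_nhds_eq τ).le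

lemma exists_holomorphic_tendsto_nhdsNE (hF : F ∈ meromorphicSubalgebra)
    (hlim : ∀ τ, ∃ c, Tendsto F (𝓝[≠] τ) (𝓝 c)) :
    ∃ G ∈ holomorphicSubalgebra, ∀ τ, Tendsto F (𝓝[≠] τ) (𝓝 (G τ)) := by
  have hF' : MeromorphicOn (extH F) {z | 0 < z.im} := hF
  let N := toMeromorphicNFOn (extH F) {z | 0 < z.im}
  have analyticAt_N (τ : ℍ) : AnalyticAt ℂ N τ := by
    have meromorphicNFAt_N : MeromorphicNFAt N τ :=
      meromorphicNFOn_toMeromorphicNFOn (extH F) {z | 0 < z.im} τ.im_pos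
    rw [← meromorphicNFAt_N.meromorphicOrderAt_nonneg_iff_analyticAt,
      meromorphicOrderAt_toMeromorphicNFOn hF' τ.im_pos,
      ← tendsto_nhds_iff_meromorphicOrderAt_nonneg (hF' τ τ.im_pos)]
    exact (hlim τ).imp fun c hc => tendsto_extH_nhdsNE.2 hc
  refine ⟨fun τ => N τ, UpperHalfPlane.mdifferentiable_iff.2 fun z hz => ?_, fun τ => ?_⟩
  · have eqOn_N : Set.EqOn ((fun τ : ℍ => N τ) ∘ ofComplex) N {z | 0 < z.im} := fun w hw => by
      rw [Function.comp_apply, ofComplex_apply_of_im_pos hw]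
    exact (DifferentiableAt.differentiableWithinAt
      (analyticAt_N ⟨z, hz⟩).differentiableAt).congr eqOn_N (eqOn_N hz)
  · exact tendsto_extH_nhdsNE.1 (((analyticAt_N τ).continuousAt.tendsto.mono_left
      nhdsWithin_le_nhds).congr' (hF'.toMeromorphicNFOn_eq_self_on_nhdsNE τ.im_pos))

lemma exists_tendsto_sub_pow_mul (hG : G ∈ holomorphicSubalgebra) (hF : F ∈ meromorphicSubalgebra)
    (τ : ℍ) : ∃ n : ℕ, ∃ c, Tendsto (fun σ => (G σ - G τ) ^ n * F σ) (𝓝[≠] τ) (𝓝 c) := by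
  obtain ⟨n, hn⟩ := hF τ τ.im_pos
  have continuousAt_dslope : ContinuousAt (dslope (extH G) τ) τ :=
    continuousAt_dslope_same.2 (analyticAt_extH hG τ).differentiableAt
  have hlim := (((continuousAt_dslope.pow n).mul hn.continuousAt).comp
    UpperHalfPlane.continuous_coe.continuousAt).tendsto.mono_left
    (nhdsWithin_le_nhds (a := τ) (s := {τ}ᶜ))
  refine ⟨n, _, hlim.congr fun σ => ?_⟩
  rw [← extH_coe G σ, ← extH_coe G τ, ← extH_coe F σ, ← sub_smul_dslope (extH G)]
  simp only [Function.comp_apply, Pi.mul_apply, Pi.pow_apply, smul_eq_mul, mul_pow]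
  ring

end MeromorphicFunctions

section LevelOneMeromorphic

/-! ### Level one: meromorphic modular functions are rational functions of `j` -/

variable {m : ℕ} {F P Q : ℍ → ℂ}

lemma adjoin_jinv_le_holomorphicSubalgebra : Algebra.adjoin ℂ {jinv} ≤ holomorphicSubalgebra :=
  Algebra.adjoin_le (by simpa using jinv_mem_holomorphicSubalgebra)

lemma continuous_of_mem_adjoin_jinv (hQ : Q ∈ Algebra.adjoin ℂ {jinv}) : Continuous Q :=
  (adjoin_jinv_le_holomorphicSubalgebra hQ).continuous

lemma apply_smul_of_mem_adjoin_jinv (hQ : Q ∈ Algebra.adjoin ℂ {jinv}) (γ : SL(2, ℤ)) (τ : ℍ) :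
    Q (γ • τ) = Q τ := by
  induction hQ using Algebra.adjoin_induction with
  | mem G hG => rw [Set.mem_singleton_iff.1 hG, jinv_smul]
  | algebraMap c => rfl
  | add G H _ _ hG hH => rw [Pi.add_apply, Pi.add_apply, hG, hH]
  | mul G H _ _ hG hH => rw [Pi.mul_apply, Pi.mul_apply, hG, hH]

lemma jinv_mem_laurentSubalgebra_complex (hm : 0 < m) : jinv ∈ laurentSubalgebra ℂ m :=
  mem_laurentSubalgebra_of_one hm (mem_laurentSubalgebra_complex jinv_mem_laurentSubalgebra)

lemma eventually_continuousAt_of_mem_laurentSubalgebra (hm : 0 < m)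
    (hF : F ∈ laurentSubalgebra ℂ m) : ∀ᶠ τ in atImInfty, ContinuousAt F τ := by
  obtain ⟨n, φ, hφ, hFφ⟩ := hF
  have analyticAt_φ := (tendsto_qpow_one_nhds_zero hm).eventually hφ.1.eventually_analyticAt
  obtain ⟨A, hA⟩ := (atImInfty_mem _).1 (hFφ.and analyticAt_φ)
  have continuous_qpow (n : ℤ) : Continuous (qpow m n) :=
    (qpow_mem_holomorphicSubalgebra m n).continuous
  refine (atImInfty_mem _).2 ⟨A + 1, fun τ hτ => ?_⟩
  have continuousAt_series : ContinuousAt (fun σ => qpow m n σ * φ (qpow m 1 σ)) τ :=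
    (continuous_qpow n).continuousAt.mul <| ContinuousAt.comp (f := qpow m 1)
      (hA τ (by linarith)).2.continuousAt (continuous_qpow 1).continuousAt
  refine continuousAt_series.congr ?_
  filter_upwards [(isOpen_lt continuous_const UpperHalfPlane.continuous_im).mem_nhds
    (show A < τ.im by linarith)] with σ hσ
  exact (hA σ (le_of_lt hσ)).1.symm

lemma exists_tendsto_mul_of_continuous (hQ : Continuous Q) {τ : ℍ}
    (hF : ∃ c, Tendsto F (𝓝[≠] τ) (𝓝 c)) : ∃ c, Tendsto (Q * F) (𝓝[≠] τ) (𝓝 c) :=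
  hF.imp' (Q τ * ·) fun _ hc => (hQ.continuousAt.tendsto.mono_left nhdsWithin_le_nhds).mul hc

lemma exists_mem_adjoin_jinv_tendsto_nhds (hF : F ∈ meromorphicSubalgebra) (τ : ℍ) :
    ∃ Q ∈ Algebra.adjoin ℂ {jinv}, (∀ᶠ σ in atImInfty, Q σ ≠ 0) ∧
      ∀ᶠ σ in 𝓝 τ, ∃ c, Tendsto (Q * F) (𝓝[≠] σ) (𝓝 c) := by
  obtain ⟨n, tendsto_at⟩ := exists_tendsto_sub_pow_mul jinv_mem_holomorphicSubalgebra hF τ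
  have Q_mem : (jinv - algebraMap ℂ (ℍ → ℂ) (jinv τ)) ^ n ∈ Algebra.adjoin ℂ {jinv} :=
    pow_mem (sub_mem (Algebra.self_mem_adjoin_singleton ℂ jinv) (Subalgebra.algebraMap_mem _ _)) n
  refine ⟨_, Q_mem, ?_, ?_⟩
  · filter_upwards [tendsto_jinv_cobounded.eventually (Bornology.eventually_ne_cobounded (jinv τ))]
      with σ hσ
    exact pow_ne_zero n (sub_ne_zero.2 hσ)
  · have tendsto_near := eventually_nhdsWithin_iff.1
      (eventually_continuousAt_of_mem_meromorphicSubalgebra hF τ)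
    filter_upwards [tendsto_near] with σ hσ
    rcases eq_or_ne σ τ with rfl | hne
    · exact tendsto_at
    · exact exists_tendsto_mul_of_continuous (continuous_of_mem_adjoin_jinv Q_mem)
        ⟨_, (hσ hne).tendsto.mono_left nhdsWithin_le_nhds⟩

lemma exists_mem_adjoin_jinv_tendsto_of_isCompact (hF : F ∈ meromorphicSubalgebra) {K : Set ℍ}
    (hK : IsCompact K) : ∃ Q ∈ Algebra.adjoin ℂ {jinv}, (∀ᶠ σ in atImInfty, Q σ ≠ 0) ∧
      ∀ τ ∈ K, ∃ c, Tendsto (Q * F) (𝓝[≠] τ) (𝓝 c) := by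
  refine hK.induction_on ⟨1, one_mem _, by simp, by simp⟩ ?_ ?_ fun τ _ => ?_
  · rintro s t hst ⟨Q, hQ, hQ0, htendsto⟩
    exact ⟨Q, hQ, hQ0, fun τ hτ => htendsto τ (hst hτ)⟩
  · rintro s t ⟨Q, hQ, hQ0, hs⟩ ⟨R, hR, hR0, ht⟩
    refine ⟨R * Q, mul_mem hR hQ, hR0.mp (hQ0.mono fun _ hQ hR => mul_ne_zero hR hQ), ?_⟩
    rintro τ (hτ | hτ)
    · rw [mul_assoc]
      exact exists_tendsto_mul_of_continuous (continuous_of_mem_adjoin_jinv hR) (hs τ hτ)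
    · rw [mul_comm R, mul_assoc]
      exact exists_tendsto_mul_of_continuous (continuous_of_mem_adjoin_jinv hQ) (ht τ hτ)
  · obtain ⟨Q, hQ, hQ0, htendsto⟩ := exists_mem_adjoin_jinv_tendsto_nhds hF τ
    exact ⟨_, mem_nhdsWithin_of_mem_nhds htendsto, Q, hQ, hQ0, fun _ hσ => hσ⟩

lemma exists_mem_adjoin_jinv_tendsto (hm : 0 < m) (hF : F ∈ meromorphicSubalgebra)
    (hF' : F ∈ laurentSubalgebra ℂ m) (hinv : ∀ (γ : SL(2, ℤ)) (τ : ℍ), F (γ • τ) = F τ) :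
    ∃ Q ∈ Algebra.adjoin ℂ {jinv}, (∀ᶠ σ in atImInfty, Q σ ≠ 0) ∧
      ∀ τ, ∃ c, Tendsto (Q * F) (𝓝[≠] τ) (𝓝 c) := by
  obtain ⟨A, hA⟩ := (atImInfty_mem _).1 (eventually_continuousAt_of_mem_laurentSubalgebra hm hF')
  obtain ⟨Q, hQ, hQ0, hlim⟩ := exists_mem_adjoin_jinv_tendsto_of_isCompact hF
    (ModularGroup.isCompact_truncatedFundamentalDomain A)
  refine ⟨Q, hQ, hQ0, fun τ => ?_⟩
  obtain ⟨γ, hγ⟩ := ModularGroup.exists_smul_mem_fd τ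
  obtain ⟨c, hc⟩ : ∃ c, Tendsto (Q * F) (𝓝[≠] (γ • τ)) (𝓝 c) := by
    rcases le_total (γ • τ).im A with him | him
    · exact hlim _ ⟨hγ, him⟩
    · exact exists_tendsto_mul_of_continuous (continuous_of_mem_adjoin_jinv hQ)
        ⟨_, (hA _ him).tendsto.mono_left nhdsWithin_le_nhds⟩
  refine ⟨c, (hc.comp (tendsto_smul_nhdsNE γ τ)).congr fun σ => ?_⟩
  simp only [Function.comp_apply, Pi.mul_apply, apply_smul_of_mem_adjoin_jinv hQ, hinv]

lemma exists_mem_adjoin_jinv_mul_eventuallyEq (hm : 0 < m) (hF : F ∈ meromorphicSubalgebra)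
    (hF' : F ∈ laurentSubalgebra ℂ m) (hinv : ∀ (γ : SL(2, ℤ)) (τ : ℍ), F (γ • τ) = F τ) :
    ∃ P ∈ Algebra.adjoin ℂ {jinv}, ∃ Q ∈ Algebra.adjoin ℂ {jinv},
      (∀ᶠ τ in atImInfty, Q τ ≠ 0) ∧ Q * F =ᶠ[atImInfty] P := by
  obtain ⟨Q, hQ, hQ0, hlim⟩ := exists_mem_adjoin_jinv_tendsto hm hF hF' hinv
  obtain ⟨P, hP, htendsto⟩ := exists_holomorphic_tendsto_nhdsNE (mul_mem
    (holomorphicSubalgebra_le_meromorphicSubalgebra (adjoin_jinv_le_holomorphicSubalgebra hQ)) hF)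
    hlim
  have P_smul (γ : SL(2, ℤ)) (τ : ℍ) : P (γ • τ) = P τ := by
    refine tendsto_nhds_unique (((htendsto (γ • τ)).comp (tendsto_smul_nhdsNE γ τ)).congr
      fun σ => ?_) (htendsto τ)
    simp only [Function.comp_apply, Pi.mul_apply, apply_smul_of_mem_adjoin_jinv hQ, hinv]
  have mul_eq : Q * F =ᶠ[atImInfty] P := by
    filter_upwards [eventually_continuousAt_of_mem_laurentSubalgebra hm hF'] with τ hτ
    exact tendsto_nhds_unique (((continuous_of_mem_adjoin_jinv hQ).continuousAt.mul hτ).tendsto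
      |>.mono_left nhdsWithin_le_nhds) (htendsto τ)
  have mul_mem_laurent : Q * F ∈ laurentSubalgebra ℂ m :=
    mul_mem (Algebra.adjoin_le (by simpa using jinv_mem_laurentSubalgebra_complex hm) hQ) hF'
  obtain ⟨k, hk⟩ := exists_isBigO_qpow_one hm (laurentSubalgebra_congr mul_mem_laurent mul_eq)
  exact ⟨P, mem_adjoin_jinv_of_isBigO hP P_smul hk, Q, hQ, hQ0, mul_eq⟩

end LevelOneMeromorphic

section LagrangeInterpolation

/-! ### Lagrange interpolation along an orbit -/

open Polynomial

variable {ι A : Type*} [Fintype ι] [DecidableEq ι] [CommRing A]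

/-- The Lagrange interpolation polynomial without its denominators: at the node `x i` it takes the
value `v i * ∏ j ≠ i, (x i - x j)`, so that it makes sense over every commutative ring. -/
def lagrangeNumerator (x v : ι → A) : A[X] :=
  ∑ i, C (v i) * ∏ j ∈ Finset.univ.erase i, (X - C (x j))

lemma eval_lagrangeNumerator (x v : ι → A) (i : ι) :
    (lagrangeNumerator x v).eval (x i) = v i * ∏ j ∈ Finset.univ.erase i, (x i - x j) := by
  have eval_eq (k : ι) : (C (v k) * ∏ j ∈ Finset.univ.erase k, (X - C (x j))).eval (x i) =
      v k * ∏ j ∈ Finset.univ.erase k, (x i - x j) := by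
    simp [eval_prod]
  rw [lagrangeNumerator, eval_finsetSum, Finset.sum_congr rfl fun k _ => eval_eq k]
  refine Finset.sum_eq_single_of_mem i (Finset.mem_univ i) fun k _ hk => ?_
  rw [Finset.prod_eq_zero (Finset.mem_erase.2 ⟨hk.symm, Finset.mem_univ i⟩) (sub_self _), mul_zero]

lemma coeff_lagrangeNumerator_mem {S : Type*} [SetLike S A] [SubringClass S A] (s : S)
    {x v : ι → A} (hx : ∀ i, x i ∈ s) (hv : ∀ i, v i ∈ s) (n : ℕ) :
    (lagrangeNumerator x v).coeff n ∈ s := by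
  let f := SubringClass.subtype s
  have map_eq : lagrangeNumerator x v =
      (lagrangeNumerator (fun i => (⟨x i, hx i⟩ : s)) fun i => ⟨v i, hv i⟩).map f := by
    simp [lagrangeNumerator, Polynomial.map_sum, Polynomial.map_prod, f]
  rw [map_eq, coeff_map]
  exact SetLike.coe_mem _

lemma smul_lagrangeNumerator {G : Type*} [Group G] [MulAction G ι] [MulSemiringAction G A]
    {x v : ι → A} (hx : ∀ (g : G) i, x (g • i) = g • x i) (hv : ∀ (g : G) i, v (g • i) = g • v i)
    (g : G) : g • lagrangeNumerator x v = lagrangeNumerator x v := by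
  rw [lagrangeNumerator, Finset.smul_sum]
  refine Fintype.sum_equiv (MulAction.toPerm g) _ _ fun i => ?_
  rw [smul_mul', smul_C, MulAction.toPerm_apply, hv, Finset.smul_prod']
  congr 1
  refine Finset.prod_equiv (MulAction.toPerm g) (fun j => ?_) fun j _ => ?_
  · simp
  · rw [MulAction.toPerm_apply, smul_sub, smul_X, smul_C, hx]

end LagrangeInterpolation

section RationalityOverComplex

/-! ### Modular functions are rational functions of `j` and the Fricke function -/

open DomMulAct

variable {m : ℕ} {f h : ℍ → ℂ}

instance {M α R : Type*} [Monoid M] [MulAction M α] [Semiring R] :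
    MulSemiringAction Mᵈᵐᵃ (α → R) where
  smul_one := smul_one
  smul_mul := smul_mul'

lemma gammaUpper_mul_inv {γ δ : SL(2, ℤ)} (h0 : ((γ 0 0 : ℤ) : ZMod m) = δ 0 0)
    (h1 : ((γ 0 1 : ℤ) : ZMod m) = δ 0 1) : GammaUpper m (γ * δ⁻¹) := by
  have hdet := congrArg (Int.cast : ℤ → ZMod m) ((Matrix.det_fin_two δ.1).symm.trans δ.det_coe)
  push_cast at hdet
  have h00 : (γ * δ⁻¹).1 0 0 = γ 0 0 * δ 1 1 - γ 0 1 * δ 1 0 := by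
    simp [Matrix.mul_apply, adjugate_fin_two, sub_eq_add_neg]
  have h01 : (γ * δ⁻¹).1 0 1 = γ 0 1 * δ 0 0 - γ 0 0 * δ 0 1 := by
    simp [Matrix.mul_apply, adjugate_fin_two]
    ring
  refine gammaUpper_of_row_eq ?_ ?_
  · rw [h00, Int.cast_sub, Int.cast_mul, Int.cast_mul, h0, h1, hdet]
  · rw [h01, Int.cast_sub, Int.cast_mul, Int.cast_mul, h0, h1, mul_comm, sub_self]

lemma finite_orbit_of_gammaUpper (hm : m ≠ 0) {X : Type*} [MulAction SL(2, ℤ)ᵈᵐᵃ X] {a : X}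
    (ha : ∀ γ : SL(2, ℤ), GammaUpper m γ → mk γ • a = a) :
    (MulAction.orbit SL(2, ℤ)ᵈᵐᵃ a).Finite := by
  have : NeZero m := ⟨hm⟩
  let row (g : SL(2, ℤ)ᵈᵐᵃ) : ZMod m × ZMod m :=
    (((mk.symm g 0 0 : ℤ) : ZMod m), ((mk.symm g 0 1 : ℤ) : ZMod m))
  have factorsThrough_row : Function.FactorsThrough (fun g : SL(2, ℤ)ᵈᵐᵃ => g • a) row := by
    intro g g' hrow
    have gammaUpper := gammaUpper_mul_inv (congrArg Prod.fst hrow) (congrArg Prod.snd hrow)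
    calc g • a = (g' * mk (mk.symm g * (mk.symm g')⁻¹)) • a := by simp
      _ = g' • a := by rw [mul_smul, ha _ gammaUpper]
  refine (Set.finite_range (Function.extend row (fun g => g • a) fun _ => a)).subset ?_
  rintro _ ⟨g, rfl⟩
  exact ⟨row g, factorsThrough_row.extend_apply _ g⟩

lemma exists_mem_adjoin_mul_eval_eventuallyEq (hm : 0 < m) {p : Polynomial (ℍ → ℂ)}
    (hp : ∀ n, p.coeff n ∈ meromorphicSubalgebra ⊓ laurentSubalgebra ℂ m)
    (hinv : ∀ g : SL(2, ℤ)ᵈᵐᵃ, g • p = p) (f : ℍ → ℂ) :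
    ∃ P ∈ Algebra.adjoin ℂ {jinv, f}, ∃ Q ∈ Algebra.adjoin ℂ {jinv, f},
      (∀ᶠ τ in atImInfty, Q τ ≠ 0) ∧ Q * p.eval f =ᶠ[atImInfty] P := by
  have adjoin_jinv_le : Algebra.adjoin ℂ {jinv} ≤ Algebra.adjoin ℂ {jinv, f} :=
    Algebra.adjoin_mono (by simp)
  have f_mem : f ∈ Algebra.adjoin ℂ {jinv, f} := Algebra.subset_adjoin (by simp)
  rw [Polynomial.eval_eq_sum_range]
  refine Finset.sum_induction _ (fun F => ∃ P ∈ Algebra.adjoin ℂ {jinv, f},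
    ∃ Q ∈ Algebra.adjoin ℂ {jinv, f}, (∀ᶠ τ in atImInfty, Q τ ≠ 0) ∧ Q * F =ᶠ[atImInfty] P)
    ?_ ?_ fun n _ => ?_
  · rintro F G ⟨P, hP, Q, hQ, hQ0, hF⟩ ⟨R, hR, S, hS, hS0, hG⟩
    refine ⟨S * P + Q * R, add_mem (mul_mem hS hP) (mul_mem hQ hR), Q * S, mul_mem hQ hS, ?_, ?_⟩
    · filter_upwards [hQ0, hS0] with τ hQτ hSτ
      exact mul_ne_zero hQτ hSτ
    · filter_upwards [hF, hG] with τ hFτ hGτ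
      simp only [Pi.mul_apply, Pi.add_apply] at hFτ hGτ ⊢
      linear_combination S τ * hFτ + Q τ * hGτ
  · exact ⟨0, zero_mem _, 1, one_mem _, by simp, by simp⟩
  · have coeff_smul (γ : SL(2, ℤ)) (τ : ℍ) : p.coeff n (γ • τ) = p.coeff n τ :=
      congrFun (congrArg (Polynomial.coeff · n) (hinv (mk γ))) τ
    obtain ⟨P, hP, Q, hQ, hQ0, hcoeff⟩ :=
      exists_mem_adjoin_jinv_mul_eventuallyEq hm (hp n).1 (hp n).2 coeff_smul
    refine ⟨P * f ^ n, mul_mem (adjoin_jinv_le hP) (pow_mem f_mem n), Q, adjoin_jinv_le hQ, hQ0, ?_⟩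
    rw [← mul_assoc]
    exact hcoeff.mul .rfl

lemma mk_smul_eq_of_fricke_smul_eventuallyEq (hm : 1 < m)
    (hinv : ∀ γ : SL(2, ℤ), GammaUpper m γ → ∀ τ : ℍ, h (γ • τ) = h τ) {γ : SL(2, ℤ)}
    (hγ : mk γ • fricke ((1 : ℚ) / m, 0) =ᶠ[atImInfty] fricke ((1 : ℚ) / m, 0)) :
    mk γ • h = h := by
  ext τ
  rcases gammaUpper_or_neg_of_fricke_smul_eventuallyEq hm hγ with hγ | hγ
  · exact hinv γ hγ τ
  · rw [← hinv _ hγ τ, ModularGroup.SL_neg_smul]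
    rfl

lemma mk_smul_fricke_mem (hm : m ≠ 0) (γ : SL(2, ℤ)) :
    mk γ • fricke ((1 : ℚ) / m, 0) ∈ meromorphicSubalgebra ⊓ laurentSubalgebra ℂ m := by
  have smul_eq : mk γ • fricke ((1 : ℚ) / m, 0) = fricke ((γ 0 0 : ℤ) / m, (γ 0 1 : ℤ) / m) :=
    funext (fricke_one_div_smul m γ)
  rw [smul_eq]
  exact ⟨holomorphicSubalgebra_le_meromorphicSubalgebra
    (fricke_div_mem_holomorphicSubalgebra hm _ _), fricke_div_mem_laurentSubalgebra hm _ _⟩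

lemma eventually_prod_sub_ne_zero (hm : 0 < m) {ι : Type*} {x : ι → ℍ → ℂ} {s : Finset ι}
    (hf : f ∈ laurentSubalgebra ℂ m) (hx : ∀ i ∈ s, x i ∈ laurentSubalgebra ℂ m)
    (hne : ∀ i ∈ s, ¬ x i =ᶠ[atImInfty] f) :
    ∀ᶠ τ in atImInfty, (∏ i ∈ s, (f - x i)) τ ≠ 0 := by
  have eventually_ne : ∀ i ∈ s, ∀ᶠ τ in atImInfty, (f - x i) τ ≠ 0 := fun i hi =>
    (eventually_eq_zero_or_eventually_ne_zero hm (sub_mem hf (hx i hi))).resolve_left fun h0 =>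
      hne i hi (h0.mono fun τ hτ => (sub_eq_zero.1 hτ).symm)
  filter_upwards [(Filter.eventually_all_finset s).2 eventually_ne] with τ hτ
  rw [Finset.prod_apply]
  exact Finset.prod_ne_zero_iff.2 hτ

section Equivariant

variable {ι : Type*} [MulAction SL(2, ℤ)ᵈᵐᵃ ι] {x v : ι → ℍ → ℂ}

lemma exists_mem_adjoin_mul_prod_eventuallyEq [Fintype ι] [DecidableEq ι] (hm : 0 < m)
    (hx : ∀ i, x i ∈ meromorphicSubalgebra ⊓ laurentSubalgebra ℂ m)
    (hv : ∀ i, v i ∈ meromorphicSubalgebra ⊓ laurentSubalgebra ℂ m)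
    (hxs : ∀ (g : SL(2, ℤ)ᵈᵐᵃ) i, x (g • i) = g • x i)
    (hvs : ∀ (g : SL(2, ℤ)ᵈᵐᵃ) i, v (g • i) = g • v i) (i : ι) :
    ∃ P ∈ Algebra.adjoin ℂ {jinv, x i}, ∃ Q ∈ Algebra.adjoin ℂ {jinv, x i},
      (∀ᶠ τ in atImInfty, Q τ ≠ 0) ∧
        Q * (v i * ∏ j ∈ Finset.univ.erase i, (x i - x j)) =ᶠ[atImInfty] P := by
  rw [← eval_lagrangeNumerator]
  exact exists_mem_adjoin_mul_eval_eventuallyEq hm (coeff_lagrangeNumerator_mem _ hx hv)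
    (smul_lagrangeNumerator hxs hvs) (x i)

lemma exists_mem_adjoin_mul_eventuallyEq_of_equivariant [Finite ι] (hm : 0 < m)
    (hx : ∀ i, x i ∈ meromorphicSubalgebra ⊓ laurentSubalgebra ℂ m)
    (hv : ∀ i, v i ∈ meromorphicSubalgebra ⊓ laurentSubalgebra ℂ m)
    (hxs : ∀ (g : SL(2, ℤ)ᵈᵐᵃ) i, x (g • i) = g • x i)
    (hvs : ∀ (g : SL(2, ℤ)ᵈᵐᵃ) i, v (g • i) = g • v i) {i : ι}
    (hne : ∀ j ≠ i, ¬ x j =ᶠ[atImInfty] x i) :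
    ∃ P ∈ Algebra.adjoin ℂ {jinv, x i}, ∃ Q ∈ Algebra.adjoin ℂ {jinv, x i},
      (∀ᶠ τ in atImInfty, Q τ ≠ 0) ∧ Q * v i =ᶠ[atImInfty] P := by
  classical
  cases nonempty_fintype ι
  obtain ⟨P, hP, Q, hQ, hQ0, hnum⟩ :=
    exists_mem_adjoin_mul_prod_eventuallyEq hm hx hv hxs hvs i
  obtain ⟨R, hR, S, hS, hS0, hden⟩ :=
    exists_mem_adjoin_mul_prod_eventuallyEq hm hx (v := 1) (fun _ => one_mem _) hxs
      (fun _ _ => rfl) i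
  have prod_ne_zero := eventually_prod_sub_ne_zero hm (s := Finset.univ.erase i) (hx i).2
    (fun j _ => (hx j).2) fun j hj => hne j (Finset.ne_of_mem_erase hj)
  refine ⟨S * P, mul_mem hS hP, Q * R, mul_mem hQ hR, ?_, ?_⟩
  · filter_upwards [hQ0, hS0, hden, prod_ne_zero] with τ hQτ hSτ hdenτ hprodτ
    rw [Pi.mul_apply, ← hdenτ, Pi.mul_apply, Pi.one_apply, one_mul]
    exact mul_ne_zero hQτ (mul_ne_zero hSτ hprodτ)
  · filter_upwards [hnum, hden] with τ hnumτ hdenτ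
    simp only [Pi.mul_apply, Pi.one_apply, one_mul] at hnumτ hdenτ ⊢
    linear_combination S τ * hnumτ - Q τ * v i τ * hdenτ

end Equivariant

lemma exists_mem_adjoin_fricke_mul_eventuallyEq (hm : 1 < m) (hh : h ∈ meromorphicSubalgebra)
    (hinv : ∀ γ : SL(2, ℤ), GammaUpper m γ → ∀ τ : ℍ, h (γ • τ) = h τ)
    (hh' : ∀ γ : SL(2, ℤ), (fun τ => h (γ • τ)) ∈ laurentSubalgebra ℂ m) :
    ∃ P ∈ Algebra.adjoin ℂ {jinv, fricke ((1 : ℚ) / m, 0)},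
      ∃ Q ∈ Algebra.adjoin ℂ {jinv, fricke ((1 : ℚ) / m, 0)},
        (∀ᶠ τ in atImInfty, Q τ ≠ 0) ∧ Q * h =ᶠ[atImInfty] P := by
  have hm0 : m ≠ 0 := Nat.ne_zero_of_lt hm
  have fricke_inv (γ : SL(2, ℤ)) (hγ : GammaUpper m γ) :=
    fricke_one_div_smul_of_gammaUpper hm0 hγ
  let ι := MulAction.orbit SL(2, ℤ)ᵈᵐᵃ (fricke ((1 : ℚ) / m, 0), h)
  have : Finite ι := finite_orbit_of_gammaUpper hm0 fun γ hγ =>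
    Prod.ext (funext (fricke_inv γ hγ)) (funext (hinv γ hγ))
  refine exists_mem_adjoin_mul_eventuallyEq_of_equivariant (ι := ι) (x := fun i => i.1.1)
    (v := fun i => i.1.2) (i := ⟨_, MulAction.mem_orbit_self _⟩) (Nat.pos_of_ne_zero hm0)
    ?_ ?_ (fun _ _ => rfl) (fun _ _ => rfl) ?_
  · rintro ⟨_, γ, rfl⟩
    exact mk_smul_fricke_mem hm0 (mk.symm γ)
  · rintro ⟨_, γ, rfl⟩
    exact ⟨comp_smul_mem_meromorphicSubalgebra hh (mk.symm γ), hh' (mk.symm γ)⟩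
  · rintro ⟨_, γ, rfl⟩ hne hγ
    exact hne (Subtype.ext (Prod.ext (mk_smul_eq_of_fricke_smul_eventuallyEq hm fricke_inv hγ)
      (mk_smul_eq_of_fricke_smul_eventuallyEq hm hinv hγ)))

end RationalityOverComplex

section Descent

/-! ### Descent of the coefficients -/

lemma exists_sum_basis_smul_of_mem_span {ι K L V : Type*} [Field K] [Field L] [Algebra K L]
    [AddCommGroup V] [Module K V] [Module L V] [IsScalarTower K L V] (b : Module.Basis ι K L)
    {s : Set V} {x : V} (hx : x ∈ Submodule.span L s) :
    ∃ c : ι →₀ V, (∀ i, c i ∈ Submodule.span K s) ∧ x = c.sum fun i v => b i • v := by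
  obtain ⟨n, a, v, rfl⟩ := Submodule.mem_span_set'.1 hx
  refine Finset.sum_induction _ (fun x => ∃ c : ι →₀ V, (∀ i, c i ∈ Submodule.span K s) ∧
    x = c.sum fun i v => b i • v) ?_ ⟨0, fun _ => zero_mem _, by simp⟩ fun k _ => ?_
  · rintro x y ⟨c, hc, rfl⟩ ⟨d, hd, rfl⟩
    exact ⟨c + d, fun i => add_mem (hc i) (hd i),
      (Finsupp.sum_add_index' (fun _ => smul_zero _) fun _ => smul_add _).symm⟩
  · refine ⟨(b.repr (a k)).mapRange (· • (v k : V)) (zero_smul K _), fun i => ?_, ?_⟩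
    · exact Submodule.smul_mem _ _ (Submodule.subset_span (v k).2)
    · conv_lhs => rw [← b.linearCombination_repr (a k), Finsupp.linearCombination_apply]
      rw [Finsupp.sum_mapRange_index fun _ => smul_zero _, Finsupp.sum, Finset.sum_smul]
      exact Finset.sum_congr rfl fun i _ => by rw [smul_assoc, smul_comm]

variable {m : ℕ} {K : Type*} [Field K] [Algebra K ℂ]

lemma eventually_eq_zero_of_sum_mul_taylor {ι : Type*} {b : ι → ℂ} (hb : LinearIndependent K b)
    {s : Finset ι} {φ : ι → ℂ → ℂ} (hφ : ∀ i ∈ s, φ i ∈ taylorSubalgebra K)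
    (hsum : ∀ᶠ z in 𝓝 0, ∑ i ∈ s, b i * φ i z = 0) : ∀ i ∈ s, ∀ᶠ z in 𝓝 0, φ i z = 0 := by
  have hderiv : ∀ i ∈ s, ∀ n, ∃ r : K, algebraMap K ℂ r = iteratedDeriv n (φ i) 0 :=
    fun i hi => (hφ i hi).2
  choose! r hr using hderiv
  refine fun i hi => eventually_eq_zero_of_iteratedDeriv_eq_zero (hφ i hi).1 fun n => ?_
  have sum_coeff : ∑ i ∈ s, r i n • b i = 0 := by
    have sum_deriv := EventuallyEq.iteratedDeriv_eq n
      (show (fun z => ∑ i ∈ s, b i * φ i z) =ᶠ[𝓝 0] fun _ => 0 from hsum)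
    rw [iteratedDeriv_fun_sum fun i hi => contDiffAt_const.mul (hφ i hi).1.contDiffAt,
      iteratedDeriv_const, ite_self] at sum_deriv
    rw [← sum_deriv]
    refine Finset.sum_congr rfl fun i hi => ?_
    rw [iteratedDeriv_const_mul_field, ← hr i hi n, Algebra.smul_def, mul_comm]
  rw [← hr i hi n, linearIndependent_iff'.1 hb s _ sum_coeff i hi, map_zero]

lemma eventuallyEq_zero_of_sum_smul_laurent (hm : 0 < m) {ι : Type*} {b : ι → ℂ}
    (hb : LinearIndependent K b) {s : Finset ι} {G : ι → ℍ → ℂ}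
    (hG : ∀ i ∈ s, G i ∈ laurentSubalgebra K m) (hsum : ∑ i ∈ s, b i • G i =ᶠ[atImInfty] 0) :
    ∀ i ∈ s, G i =ᶠ[atImInfty] 0 := by
  choose! n φ hφ hGφ using hG
  obtain ⟨N, hN⟩ := (s.finite_toSet.image n).bddBelow
  have exists_series : ∀ i ∈ s, ∃ ψ ∈ taylorSubalgebra K,
      G i =ᶠ[atImInfty] fun τ => qpow m N τ * ψ (qpow m 1 τ) := fun i hi =>
    exists_eventuallyEq_qpow_mul_of_le (hφ i hi) (hGφ i hi) (hN (Set.mem_image_of_mem n hi))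
  choose! ψ hψ hGψ using exists_series
  have analyticAt_sum : AnalyticAt ℂ (fun z => ∑ i ∈ s, b i * ψ i z) 0 :=
    Finset.analyticAt_fun_sum _ fun i hi => analyticAt_const.mul (hψ i hi).1
  have sum_series : ∀ᶠ τ in atImInfty, ∑ i ∈ s, b i * ψ i (qpow m 1 τ) = 0 := by
    filter_upwards [hsum, (Filter.eventually_all_finset s).2 hGψ] with τ hτ hGτ
    refine (mul_eq_zero.1 ?_).resolve_left (qpow_ne_zero m N τ)
    rw [← Pi.zero_apply (M := fun _ : ℍ => ℂ) τ, ← hτ, Finset.sum_apply, Finset.mul_sum]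
    refine Finset.sum_congr rfl fun i hi => ?_
    rw [Pi.smul_apply, smul_eq_mul, hGτ i hi]
    ring
  have sum_eq_zero : ∀ᶠ z in 𝓝 0, ∑ i ∈ s, b i * ψ i z = 0 :=
    analyticAt_sum.frequently_zero_iff_eventually_zero.1
      ((tendsto_qpow_one_atImInfty hm).frequently sum_series.frequently)
  intro i hi
  filter_upwards [hGψ i hi, (tendsto_qpow_one_nhds_zero hm).eventually
    (eventually_eq_zero_of_sum_mul_taylor hb hψ sum_eq_zero i hi)] with τ hGτ hψτ
  rw [hGτ, hψτ, mul_zero, Pi.zero_apply]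

lemma exists_mem_adjoin_mul_eventuallyEq_descent (hm : 0 < m) {s : Set (ℍ → ℂ)} {h P Q : ℍ → ℂ}
    (hs : s ⊆ laurentSubalgebra K m) (hh : h ∈ laurentSubalgebra K m)
    (hP : P ∈ Algebra.adjoin ℂ s) (hQ : Q ∈ Algebra.adjoin ℂ s) (hQ0 : ¬ Q =ᶠ[atImInfty] 0)
    (hPQ : Q * h =ᶠ[atImInfty] P) :
    ∃ P' ∈ Algebra.adjoin K s, ∃ Q' ∈ Algebra.adjoin K s,
      ¬ Q' =ᶠ[atImInfty] 0 ∧ Q' * h =ᶠ[atImInfty] P' := by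
  classical
  let b := Module.Basis.ofVectorSpace K ℂ
  have exists_coords {R : ℍ → ℂ} (hR : R ∈ Algebra.adjoin ℂ s) : ∃ c : _ →₀ ℍ → ℂ,
      (∀ i, c i ∈ Algebra.adjoin K s) ∧ R = c.sum fun i F => b i • F := by
    rw [← Subalgebra.mem_toSubmodule, Algebra.adjoin_eq_span] at hR
    simp only [← Subalgebra.mem_toSubmodule (S := Algebra.adjoin K s), Algebra.adjoin_eq_span]
    exact exists_sum_basis_smul_of_mem_span b hR
  obtain ⟨p, hp, rfl⟩ := exists_coords hP
  obtain ⟨q, hq, rfl⟩ := exists_coords hQ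
  have adjoin_le : Algebra.adjoin K s ≤ laurentSubalgebra K m := Algebra.adjoin_le hs
  have coords_eq : ∀ i ∈ p.support ∪ q.support, q i * h - p i =ᶠ[atImInfty] 0 := by
    refine eventuallyEq_zero_of_sum_smul_laurent hm b.linearIndependent
      (fun i _ => sub_mem (mul_mem (adjoin_le (hq i)) hh) (adjoin_le (hp i))) ?_
    have sum_p := Finsupp.sum_of_support_subset p (Finset.subset_union_left (s₂ := q.support))
      (fun i F => b i • F) fun _ _ => smul_zero _
    have sum_q := Finsupp.sum_of_support_subset q (Finset.subset_union_right (s₁ := p.support))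
      (fun i F => b i • F) fun _ _ => smul_zero _
    rw [sum_p, sum_q] at hPQ
    simp only [smul_sub, ← smul_mul_assoc, Finset.sum_sub_distrib, ← Finset.sum_mul]
    exact hPQ.sub_eq
  obtain ⟨i, hi, hqi⟩ : ∃ i ∈ q.support, ¬ q i =ᶠ[atImInfty] 0 := by
    by_contra! hq0
    refine hQ0 ?_
    filter_upwards [(Filter.eventually_all_finset q.support).2 hq0] with τ hτ
    rw [Finsupp.sum, Finset.sum_apply]
    exact Finset.sum_eq_zero fun i hi => by rw [Pi.smul_apply, hτ i hi, Pi.zero_apply, smul_zero]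
  exact ⟨p i, hp i, q i, hq i, hqi, (coords_eq i (Finset.mem_union_right _ hi)).mono
    fun τ hτ => sub_eq_zero.1 hτ⟩

end Descent

section FunctionField

/-! ### The function field -/

variable {m : ℕ} {h W : ℍ → ℂ} {P Q : MvPolynomial (Fin 2) ℚ}

lemma eventually_eq_zero_nhdsNE_of_atImInfty (hW : W ∈ meromorphicSubalgebra)
    (h0 : W =ᶠ[atImInfty] 0) (τ : ℍ) : ∀ᶠ σ in 𝓝[≠] τ, W σ = 0 := by
  have order_eq_top_iff (ρ : ℍ) :
      meromorphicOrderAt (extH W) ρ = ⊤ ↔ ∀ᶠ σ in 𝓝[≠] ρ, W σ = 0 := by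
    rw [meromorphicOrderAt_eq_top_iff, ← map_coe_nhdsNE, eventually_map]
    simp only [extH_coe]
  obtain ⟨A, hA⟩ := (atImInfty_mem _).1 h0
  obtain ⟨σ, hσ⟩ : ∃ σ : ℍ, A < σ.im := by
    refine ⟨⟨(|A| + 1 : ℝ) * Complex.I, ?_⟩, ?_⟩
    · simpa using add_pos_of_nonneg_of_pos (abs_nonneg A) one_pos
    · simpa [UpperHalfPlane.im] using (le_abs_self A).trans_lt (lt_add_one _)
  have order_eq_top : meromorphicOrderAt (extH W) σ = ⊤ := by
    refine (order_eq_top_iff σ).2 (mem_nhdsWithin_of_mem_nhds ?_)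
    filter_upwards [(isOpen_lt continuous_const UpperHalfPlane.continuous_im).mem_nhds hσ]
      with ρ hρ
    exact hA ρ (le_of_lt hρ)
  rw [← order_eq_top_iff]
  by_contra hne
  exact MeromorphicOn.meromorphicOrderAt_ne_top_of_isPreconnected hW
    (convex_halfSpace_im_gt 0).isPreconnected τ.im_pos σ.im_pos hne order_eq_top

lemma evalJF_eq_aeval (m : ℕ) (P : MvPolynomial (Fin 2) ℚ) :
    evalJF m P = MvPolynomial.aeval ![jinv, fricke ((1 : ℚ) / m, 0)] P := by
  ext τ
  have aeval_apply := MvPolynomial.comp_aeval_apply (R := ℚ)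
    ![jinv, fricke ((1 : ℚ) / m, 0)] (Pi.evalAlgHom ℚ (fun _ : ℍ => ℂ) τ) P
  rw [Pi.evalAlgHom_apply] at aeval_apply
  rw [aeval_apply, evalJF]
  congr 2
  ext i
  fin_cases i <;> rfl

lemma mem_adjoin_jinv_fricke_iff {F : ℍ → ℂ} :
    F ∈ Algebra.adjoin ℚ {jinv, fricke ((1 : ℚ) / m, 0)} ↔ ∃ P, evalJF m P = F := by
  have range_eq : Set.range ![jinv, fricke ((1 : ℚ) / m, 0)] =
      {jinv, fricke ((1 : ℚ) / m, 0)} := by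
    simp [Matrix.range_cons, Set.pair_comm]
  rw [← range_eq, Algebra.adjoin_range_eq_range_aeval]
  simp only [AlgHom.mem_range, evalJF_eq_aeval]

lemma evalJF_mem (P : MvPolynomial (Fin 2) ℚ) {S : Subalgebra ℚ (ℍ → ℂ)} (hj : jinv ∈ S)
    (hf : fricke ((1 : ℚ) / m, 0) ∈ S) : evalJF m P ∈ S :=
  Algebra.adjoin_le (Set.pair_subset hj hf)
    (mem_adjoin_jinv_fricke_iff.2 ⟨P, rfl⟩)

lemma evalJF_mem_holomorphicSubalgebra (hm : m ≠ 0) (P : MvPolynomial (Fin 2) ℚ) :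
    evalJF m P ∈ holomorphicSubalgebra :=
  evalJF_mem P (S := holomorphicSubalgebra.restrictScalars ℚ) jinv_mem_holomorphicSubalgebra
    (by simpa using fricke_div_mem_holomorphicSubalgebra hm 1 0)

lemma evalJF_mem_laurentSubalgebra (hm : 1 < m) (P : MvPolynomial (Fin 2) ℚ) :
    evalJF m P ∈ laurentSubalgebra ℚ m :=
  evalJF_mem P (mem_laurentSubalgebra_of_one (Nat.zero_lt_of_lt hm) jinv_mem_laurentSubalgebra)
    (fricke_one_div_mem_laurentSubalgebra_rat hm)

lemma evalJF_comp_smul_mem_laurentSubalgebra (hm : 0 < m) (P : MvPolynomial (Fin 2) ℚ)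
    (γ : SL(2, ℤ)) : (fun τ => evalJF m P (γ • τ)) ∈ laurentSubalgebra ℂ m := by
  let S := ((laurentSubalgebra ℂ m).restrictScalars ℚ).comap
    (MulSemiringAction.toAlgHom ℚ (ℍ → ℂ) (DomMulAct.mk γ))
  have mem_S_iff (F : ℍ → ℂ) : F ∈ S ↔ (fun τ => F (γ • τ)) ∈ laurentSubalgebra ℂ m := Iff.rfl
  rw [← mem_S_iff]
  refine evalJF_mem P ((mem_S_iff _).2 ?_) ((mem_S_iff _).2 (mk_smul_fricke_mem hm.ne' γ).2)
  simpa only [jinv_smul] using jinv_mem_laurentSubalgebra_complex hm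

theorem exists_evalJF_mul_eventuallyEq (hm : 1 < m) (hh : IsMeroModUp m h) :
    ∃ P Q, (∃ τ, evalJF m Q τ ≠ 0) ∧ evalJF m Q * h =ᶠ[atImInfty] evalJF m P := by
  have hm0 : 0 < m := Nat.zero_lt_of_lt hm
  obtain ⟨meromorphic, invariant, ⟨A, n, c, rational⟩, cusps⟩ := hh
  have rational_laurent : h ∈ laurentSubalgebra ℚ m := mem_laurentSubalgebra_of_hasSum rational
  have complex_laurent (γ : SL(2, ℤ)) : (fun τ => h (γ • τ)) ∈ laurentSubalgebra ℂ m :=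
    let ⟨_, _, _, hc⟩ := cusps γ
    mem_laurentSubalgebra_of_hasSum hc
  obtain ⟨P, hP, Q, hQ, hQ0, hPQ⟩ :=
    exists_mem_adjoin_fricke_mul_eventuallyEq hm meromorphic invariant complex_laurent
  have generators_subset : {jinv, fricke ((1 : ℚ) / m, 0)} ⊆
      (laurentSubalgebra ℚ m : Set (ℍ → ℂ)) :=
    Set.pair_subset (mem_laurentSubalgebra_of_one hm0 jinv_mem_laurentSubalgebra)
      (fricke_one_div_mem_laurentSubalgebra_rat hm)
  obtain ⟨P', hP', Q', hQ', hQ0', hPQ'⟩ := exists_mem_adjoin_mul_eventuallyEq_descent hm0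
    generators_subset rational_laurent hP hQ
    (fun hzero => (hQ0.and hzero).exists.elim fun _ hτ => hτ.1 hτ.2) hPQ
  obtain ⟨P, rfl⟩ := mem_adjoin_jinv_fricke_iff.1 hP'
  obtain ⟨Q, rfl⟩ := mem_adjoin_jinv_fricke_iff.1 hQ'
  refine ⟨P, Q, ?_, hPQ'⟩
  by_contra! hzero
  exact hQ0' (Eventually.of_forall hzero)

lemma eq_evalJF_div_of_eventuallyEq (hm : m ≠ 0) (hh : h ∈ meromorphicSubalgebra)
    (hPQ : evalJF m Q * h =ᶠ[atImInfty] evalJF m P) {τ : ℍ} (hQ : evalJF m Q τ ≠ 0)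
    (hcont : ContinuousAt h τ) : h τ = evalJF m P τ / evalJF m Q τ := by
  have holomorphic := evalJF_mem_holomorphicSubalgebra hm
  have meromorphic (R) := holomorphicSubalgebra_le_meromorphicSubalgebra (holomorphic R)
  have continuousAt (R) : ContinuousAt (evalJF m R) τ := (holomorphic R).continuous.continuousAt
  have sub_eq_zero_near : ∀ᶠ σ in 𝓝[≠] τ, (evalJF m Q * h - evalJF m P) σ = 0 :=
    eventually_eq_zero_nhdsNE_of_atImInfty
      (sub_mem (mul_mem (meromorphic Q) hh) (meromorphic P)) (hPQ.mono fun _ => sub_eq_zero.2) τ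
  have sub_eq_zero_at : (evalJF m Q * h - evalJF m P) τ = 0 := tendsto_nhds_unique_of_eventuallyEq
    ((((continuousAt Q).mul hcont).sub (continuousAt P)).tendsto.mono_left nhdsWithin_le_nhds)
    tendsto_const_nhds sub_eq_zero_near
  rw [eq_div_iff hQ, mul_comm]
  exact sub_eq_zero.1 sub_eq_zero_at

theorem isMeroModUp_evalJF_div (hm : 1 < m) (P Q : MvPolynomial (Fin 2) ℚ) :
    IsMeroModUp m (fun τ => evalJF m P τ / evalJF m Q τ) := by
  have hm0 : 0 < m := Nat.zero_lt_of_lt hm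
  have meromorphic (R) := holomorphicSubalgebra_le_meromorphicSubalgebra
    (evalJF_mem_holomorphicSubalgebra hm0.ne' R)
  refine ⟨div_mem_meromorphicSubalgebra (meromorphic P) (meromorphic Q), fun γ hγ τ => ?_,
    exists_hasSum_of_mem_laurentSubalgebra hm0 (div_mem_laurentSubalgebra hm0
      (evalJF_mem_laurentSubalgebra hm P) (evalJF_mem_laurentSubalgebra hm Q)),
    fun γ => exists_hasSum_of_mem_laurentSubalgebra hm0 (div_mem_laurentSubalgebra hm0
      (evalJF_comp_smul_mem_laurentSubalgebra hm0 P γ)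
      (evalJF_comp_smul_mem_laurentSubalgebra hm0 Q γ))⟩
  simp only [evalJF, jinv_smul, fricke_one_div_smul_of_gammaUpper hm0.ne' hγ]

end FunctionField

/-- `F^1_m(ℚ) = ℚ(j, f_{(1/m,0)})`: every meromorphic modular
function for `Γ^1(m)` with rational Fourier coefficients is a rational function
in `j` and `f_{(1/m,0)}` over `ℚ`, and conversely every such rational function
lies in `F^1_m(ℚ)`. -/
theorem statement11 (m : ℕ) (hm : 1 < m) :
    (∀ h : ℍ → ℂ, IsMeroModUp m h →
      ∃ P Q : MvPolynomial (Fin 2) ℚ,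
        (∃ τ : ℍ, evalJF m Q τ ≠ 0) ∧
        ∀ τ : ℍ, evalJF m Q τ ≠ 0 → ContinuousAt (extH h) (τ : ℂ) →
          h τ = evalJF m P τ / evalJF m Q τ) ∧
    (∀ P Q : MvPolynomial (Fin 2) ℚ, (∃ τ : ℍ, evalJF m Q τ ≠ 0) →
      IsMeroModUp m (fun τ => evalJF m P τ / evalJF m Q τ)) := by
  refine ⟨fun h hh => ?_, fun P Q _ => isMeroModUp_evalJF_div hm P Q⟩
  obtain ⟨P, Q, hQ, hPQ⟩ := exists_evalJF_mul_eventuallyEq hm hh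
  exact ⟨P, Q, hQ, fun τ hτ hcont => eq_evalJF_div_of_eventuallyEq (Nat.ne_zero_of_lt hm) hh.1
    hPQ hτ (continuousAt_of_continuousAt_extH hcont)⟩
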